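/- arXiv:2106.15256 — 6 statements merged into one kernel-verified Lean document; each statement's English description precedes it below -/
import Mathlib

section
/- Let b ∈ ℕ⁺ and let φ be an instance of cubic monotone one-in-three 3-SAT. If the union U_{τ_PT^b}(φ) has the τ_PT^b-ESSP, then φ has a one-in-three model. -/
namespace PNS

/-- Events of a (b-bounded) type of nets: either a pair `(m,n)` or a group element `z ∈ {0,…,b}`. -/
inductive BEvent : Type
  | pair : ℕ → ℕ → BEvent
  | num : ℕ → BEvent
  deriving DecidableEq

/-- A type of nets `τ = (S_τ, E_τ, δ_τ)` with `S_τ ⊆ ℕ`. -/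
structure NetType : Type where
  states : Set ℕ
  events : Set BEvent
  delta : ℕ → BEvent → Option ℕ

def deltaPT (b : ℕ) : ℕ → BEvent → Option ℕ
  | s, .pair m n => if m ≤ s ∧ s - m + n ≤ b then some (s - m + n) else none
  | _, .num _ => none

def deltaZPT (b : ℕ) : ℕ → BEvent → Option ℕ
  | s, .pair m n => if m ≤ s ∧ s - m + n ≤ b then some (s - m + n) else none
  | s, .num z => some ((s + z) % (b + 1))

def deltaRZPT (b : ℕ) : ℕ → BEvent → Option ℕ
  | s, .pair m n => if s = m ∧ n ≤ b then some n else none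
  | s, .num z => some ((s + z) % (b + 1))

/-- The type of `b`-bounded P/T-nets. -/
def tauPT (b : ℕ) : NetType :=
  ⟨{s | s ≤ b}, {e | ∃ m n, e = BEvent.pair m n ∧ m ≤ b ∧ n ≤ b}, deltaPT b⟩

/-- The type of pure `b`-bounded P/T-nets. -/
def tauPPT (b : ℕ) : NetType :=
  ⟨{s | s ≤ b}, {e | ∃ m n, e = BEvent.pair m n ∧ m ≤ b ∧ n ≤ b ∧ (m = 0 ∨ n = 0)}, deltaPT b⟩

/-- The type of `ℤ_{b+1}`-extended `b`-bounded P/T-nets. -/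
def tauZPT (b : ℕ) : NetType :=
  ⟨{s | s ≤ b},
   {e | (∃ m n, e = BEvent.pair m n ∧ m ≤ b ∧ n ≤ b ∧ ¬(m = 0 ∧ n = 0)) ∨
        (∃ z, e = BEvent.num z ∧ z ≤ b)}, deltaZPT b⟩

/-- The type of pure `ℤ_{b+1}`-extended `b`-bounded P/T-nets. -/
def tauZPPT (b : ℕ) : NetType :=
  ⟨{s | s ≤ b},
   {e | (∃ m n, e = BEvent.pair m n ∧ m ≤ b ∧ n ≤ b ∧ ¬(m = 0 ∧ n = 0) ∧ (m = 0 ∨ n = 0)) ∨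
        (∃ z, e = BEvent.num z ∧ z ≤ b)}, deltaZPT b⟩

/-- The type of restricted `ℤ_{b+1}`-extended `b`-bounded P/T-nets. -/
def tauRZPT (b : ℕ) : NetType :=
  ⟨{s | s ≤ b},
   {e | (∃ m n, e = BEvent.pair m n ∧ m ≤ b ∧ n ≤ b ∧ ¬(m = 0 ∧ n = 0)) ∨
        (∃ z, e = BEvent.num z ∧ z ≤ b)}, deltaRZPT b⟩

/-- A (deterministic, initialized) transition system with states `S`, events `E`. -/
structure TS (S E : Type) : Type where
  delta : S → E → Option S
  init : S

def TS.Reachable {S E : Type} (A : TS S E) (s : S) : Prop :=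
  Relation.ReflTransGen (fun x y => ∃ e, A.delta x e = some y) A.init s

/-- Every state is reachable from the initial state. -/
def TS.Initialized {S E : Type} (A : TS S E) : Prop :=
  ∀ s, A.Reachable s

/-- A `τ`-region `(sup, sig)` of a TS `A`. -/
structure IsRegion (τ : NetType) {S E : Type} (A : TS S E)
    (sup : S → ℕ) (sig : E → BEvent) : Prop where
  sup_mem : ∀ s, sup s ∈ τ.states
  sig_mem : ∀ e, sig e ∈ τ.events
  edge : ∀ s e s', A.delta s e = some s' → τ.delta (sup s) (sig e) = some (sup s')

/-- `A` has the `τ`-state separation property. -/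
def HasSSP (τ : NetType) {S E : Type} (A : TS S E) : Prop :=
  ∀ s s' : S, s ≠ s' → ∃ sup sig, IsRegion τ A sup sig ∧ sup s ≠ sup s'

/-- `A` has the `τ`-event state separation property. -/
def HasESSP (τ : NetType) {S E : Type} (A : TS S E) : Prop :=
  ∀ (e : E) (s : S), A.delta s e = none →
    ∃ sup sig, IsRegion τ A sup sig ∧ τ.delta (sup s) (sig e) = none

def Solvable (τ : NetType) {S E : Type} (A : TS S E) : Prop :=
  HasESSP τ A ∧ HasSSP τ A

def sigMinus : BEvent → ℕ
  | .pair m _ => m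
  | .num _ => 0

def sigPlus : BEvent → ℕ
  | .pair _ n => n
  | .num _ => 0

def sigAbs : BEvent → ℕ
  | .pair _ _ => 0
  | .num z => z

open Classical in
/-- The linear TS `s₀ −ev 0→ s₁ −ev 1→ … −ev (m-1)→ s_m` on the `m+1` pairwise
distinct states `Fin (m+1)` with initial state `0`. -/
noncomputable def linTS {E : Type} (m : ℕ) (ev : ℕ → E) : TS (Fin (m + 1)) E where
  init := ⟨0, Nat.succ_pos m⟩
  delta s e :=
    if h : (s : ℕ) < m ∧ ev (s : ℕ) = e then some ⟨(s : ℕ) + 1, Nat.succ_lt_succ h.1⟩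
    else none

/-- The linear TS whose sequence of edge labels is the list `l`. -/
noncomputable def linOfList {E : Type} (l : List E) (d : E) : TS (Fin (l.length + 1)) E :=
  linTS l.length (fun i => l.getD i d)

/-- A `τ`-region of the union `U(A i)` of TS with pairwise disjoint state sets
(modeled by a sigma type) and shared events `E`. -/
def UnionRegion (τ : NetType) {ι : Type} {S : ι → Type} {E : Type}
    (A : ∀ i, TS (S i) E) (sup : (Σ i, S i) → ℕ) (sig : E → BEvent) : Prop :=
  (∀ s, sup s ∈ τ.states) ∧ (∀ e, sig e ∈ τ.events) ∧
    ∀ (i : ι) (s : S i) (e : E) (s' : S i),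
      (A i).delta s e = some s' → τ.delta (sup ⟨i, s⟩) (sig e) = some (sup ⟨i, s'⟩)

/-- The union has the `τ`-SSP: every SSA (pair of distinct states of the same
constituent) is solved by a `τ`-region of the union. -/
def UnionHasSSP (τ : NetType) {ι : Type} {S : ι → Type} {E : Type}
    (A : ∀ i, TS (S i) E) : Prop :=
  ∀ (i : ι) (s s' : S i), s ≠ s' →
    ∃ sup sig, UnionRegion τ A sup sig ∧ sup ⟨i, s⟩ ≠ sup ⟨i, s'⟩

/-- The union has the `τ`-ESSP: every ESSA is solved by a `τ`-region of the union. -/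
def UnionHasESSP (τ : NetType) {ι : Type} {S : ι → Type} {E : Type}
    (A : ∀ i, TS (S i) E) : Prop :=
  ∀ (e : E) (i : ι) (s : S i), (A i).delta s e = none →
    ∃ sup sig, UnionRegion τ A sup sig ∧ τ.delta (sup ⟨i, s⟩) (sig e) = none

/-- An instance of cubic monotone one-in-three 3-SAT with `m` clauses over the
`m` variables `Fin m`: the `i`-th clause is `{cl i 0, cl i 1, cl i 2}` with
`cl i 0 < cl i 1 < cl i 2`, and every variable occurs in exactly three clauses. -/
structure CMSat (m : ℕ) : Type where
  cl : Fin m → Fin 3 → Fin m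
  mono01 : ∀ i, cl i 0 < cl i 1
  mono12 : ∀ i, cl i 1 < cl i 2
  cubic : ∀ v : Fin m,
    (Finset.univ.filter (fun i => v = cl i 0 ∨ v = cl i 1 ∨ v = cl i 2)).card = 3

/-- `M` is a one-in-three model of `φ`: every clause contains exactly one variable of `M`. -/
def OneInThreeModel {m : ℕ} (φ : CMSat m) (M : Set (Fin m)) : Prop :=
  ∀ i : Fin m, ∃! j : Fin 3, φ.cl i j ∈ M

/-- Index set of the gadgets of the union `U_{τ_PT^b}(φ)`. -/
inductive PTIdx (m : ℕ) : Type
  | H : PTIdx m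
  | C : Fin 4 → PTIdx m
  | F : Fin (2 * m) → PTIdx m
  | G : Fin (2 * m) → PTIdx m
  | M : Fin m → PTIdx m
  | T : Fin m → PTIdx m

/-- Events of the union `U_{τ_PT^b}(φ)`. -/
inductive PTEv (m : ℕ) : Type
  | k : PTEv m
  | zz : PTEv m
  | o0 : PTEv m
  | o1 : PTEv m
  | kk : Fin 4 → PTEv m
  | z : Fin (2 * m) → PTEv m
  | X : Fin m → PTEv m
  deriving DecidableEq

/-- The label sequences of the linear gadgets of `U_{τ_PT^b}(φ)`. -/
def gadPT (b : ℕ) {m : ℕ} (φ : CMSat m) : PTIdx m → List (PTEv m)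
  | .H => List.replicate b .k ++ List.replicate b .zz ++ [.o0] ++ List.replicate b .k ++
      List.replicate b .zz ++ List.replicate b .o1 ++ List.replicate b .k
  | .C j => .o0 :: .kk j :: List.replicate b .o1
  | .F j => [.kk 0, .z j]
  | .G j => [.z j, .o0]
  | .M i => .kk 1 :: List.replicate b (.X i)
  | .T i => .kk 2 :: (List.replicate b (.X (φ.cl i 0)) ++
      .z ⟨2 * (i : ℕ), by have := i.isLt; omega⟩ :: (List.replicate b (.X (φ.cl i 1)) ++
      .z ⟨2 * (i : ℕ) + 1, by have := i.isLt; omega⟩ ::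
        (List.replicate b (.X (φ.cl i 2)) ++ [.kk 3])))

/-- The union `U_{τ_PT^b}(φ)` of linear gadget TS. -/
noncomputable def UPT (b : ℕ) {m : ℕ} (φ : CMSat m) :
    ∀ i : PTIdx m, TS (Fin ((gadPT b φ i).length + 1)) (PTEv m) :=
  fun i => linOfList (gadPT b φ i) PTEv.k

/-! A region solving the atom `(k, h_{0,2b})` sends each `b`-fold block `e^b` either to a constant
run or to a full sweep `0 → b` or `b → 0`. Since `k` is enabled wherever a block `k^b` starts, its
failure at `h_{0,2b}` forces `o₀` and `o₁^b` to be sweeps in the same direction; passing to the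
complementary region if necessary, both go upwards. Then every `k_j` sweeps downwards, every `z_j`
has effect `0`, and every variable event has effect `0` or `1`. The path `T_i` climbs from `0` to
`b` between `k₂` and `k₃`, so exactly one of the variables of `ζ_i` has effect `1`. -/

/-- The transition function `δ` extended to words: the state reached from `s` by reading `w`. -/
def run {S E : Type*} (δ : S → E → Option S) (s : S) (w : List E) : Option S :=
  w.foldlM δ s

section Run

variable {S E : Type*} {δ : S → E → Option S} {s t : S}

@[simp]
theorem run_nil : run δ s [] = some s := rfl

@[simp]
theorem run_cons_eq_some {e : E} {w : List E} :
    run δ s (e :: w) = some t ↔ ∃ r, δ s e = some r ∧ run δ r w = some t := by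
  simp only [run, List.foldlM_cons, Option.bind_eq_bind, Option.bind_eq_some_iff]

@[simp]
theorem run_append_eq_some {u v : List E} :
    run δ s (u ++ v) = some t ↔ ∃ r, run δ s u = some r ∧ run δ r v = some t := by
  simp only [run, List.foldlM_append, Option.bind_eq_bind, Option.bind_eq_some_iff]

theorem delta_ne_none_of_run_replicate {n : ℕ} {e : E} (hn : 1 ≤ n)
    (h : run δ s (List.replicate n e) = some t) : δ s e ≠ none := by
  obtain ⟨n, rfl⟩ := Nat.exists_eq_add_of_le' hn
  rw [List.replicate_succ, run_cons_eq_some] at h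
  obtain ⟨r, hr, -⟩ := h
  simp [hr]

end Run

section LinearTS

variable {E : Type} {l : List E} {d : E} {s t : Fin (l.length + 1)}

theorem linOfList_delta_eq_some_iff {e : E} :
    (linOfList l d).delta s e = some t ↔ l[(s : ℕ)]? = some e ∧ (t : ℕ) = s + 1 := by
  by_cases hs : (s : ℕ) < l.length
  · by_cases he : l[(s : ℕ)] = e
    · simp [linOfList, linTS, hs, he, Fin.ext_iff, eq_comm]
    · simp [linOfList, linTS, hs, he]
  · simp [linOfList, linTS, hs]

theorem run_linOfList {u v w : List E} (hl : l = u ++ (w ++ v)) (hs : (s : ℕ) = u.length)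
    (ht : (t : ℕ) = u.length + w.length) : run (linOfList l d).delta s w = some t := by
  induction w generalizing u s with
  | nil => simp [Fin.ext_iff, hs, ht]
  | cons e w ih =>
    have hlt : u.length + 1 < l.length + 1 := by simp [hl]
    refine run_cons_eq_some.2 ⟨⟨u.length + 1, hlt⟩, ?_, ?_⟩
    · simp [linOfList_delta_eq_some_iff, hl, hs]
    · exact ih (u := u ++ [e]) (by simp [hl]) (by simp) (by simp [ht]; omega)

end LinearTS

theorem UnionRegion.run_map {τ : NetType} {ι : Type} {S : ι → Type} {E : Type}
    {A : ∀ i, TS (S i) E} {sup : (Σ i, S i) → ℕ} {sig : E → BEvent}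
    (hR : UnionRegion τ A sup sig) {i : ι} {s t : S i} {w : List E}
    (h : run (A i).delta s w = some t) :
    run τ.delta (sup ⟨i, s⟩) (w.map sig) = some (sup ⟨i, t⟩) := by
  induction w generalizing s with
  | nil => simp_all
  | cons e w ih =>
    obtain ⟨r, hr, h⟩ := run_cons_eq_some.1 h
    exact run_cons_eq_some.2 ⟨_, hR.2.2 i s e r hr, ih h⟩

/-- The effect `n - m` of the event `(m, n)`: the amount it adds to a state. Junk value `0` on
group elements, which are not events of `tauPT`. -/
def BEvent.effect (e : BEvent) : ℤ :=
  sigPlus e - sigMinus e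

/-- The event of opposite effect in the complementary region. By truncated subtraction one of its
entries is `0`; the plain swap `(n, m)` may be disabled at `b - s` although `(m, n)` is enabled
at `s`. -/
def BEvent.opposite : BEvent → BEvent
  | .pair m n => .pair (n - m) (m - n)
  | .num z => .num z

theorem BEvent.effect_opposite (e : BEvent) : e.opposite.effect = -e.effect := by
  cases e <;> simp only [opposite, effect, sigPlus, sigMinus] <;> omega

section PT

variable {b s t : ℕ}

theorem tauPT_delta_eq_some {e : BEvent} (h : (tauPT b).delta s e = some t) :
    t ≤ b ∧ (t : ℤ) = s + e.effect := by
  cases e with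
  | num z => simp [tauPT, deltaPT] at h
  | pair m n =>
    simp only [tauPT, deltaPT, Option.ite_none_right_eq_some, Option.some.injEq] at h
    simp only [BEvent.effect, sigPlus, sigMinus]
    omega

theorem tauPT_delta_opposite {e : BEvent} (hs : s ≤ b) (h : (tauPT b).delta s e = some t) :
    (tauPT b).delta (b - s) e.opposite = some (b - t) := by
  cases e with
  | num z => simp [tauPT, deltaPT] at h
  | pair m n =>
    simp only [tauPT, deltaPT, BEvent.opposite, Option.ite_none_right_eq_some,
      Option.some.injEq] at h ⊢
    omega

theorem UnionRegion.complement {ι : Type} {S : ι → Type} {E : Type} {A : ∀ i, TS (S i) E}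
    {sup : (Σ i, S i) → ℕ} {sig : E → BEvent} (hR : UnionRegion (tauPT b) A sup sig) :
    UnionRegion (tauPT b) A (fun s => b - sup s) (fun e => (sig e).opposite) := by
  obtain ⟨hsup, hsig, hedge⟩ := hR
  refine ⟨fun s => Nat.sub_le b (sup s), fun e => ?_, fun i s e t h => ?_⟩
  · obtain ⟨m, n, he, hm, hn⟩ := hsig e
    exact ⟨n - m, m - n, by simp only [he, BEvent.opposite], by omega, by omega⟩
  · exact tauPT_delta_opposite (hsup ⟨i, s⟩) (hedge i s e t h)

theorem le_of_run_tauPT {w : List BEvent} (hs : s ≤ b)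
    (h : run (tauPT b).delta s w = some t) : t ≤ b := by
  induction w generalizing s with
  | nil => simp_all
  | cons e w ih =>
    obtain ⟨r, hr, h⟩ := run_cons_eq_some.1 h
    exact ih (tauPT_delta_eq_some hr).1 h

theorem run_tauPT_eq_add_sum_effect {w : List BEvent}
    (h : run (tauPT b).delta s w = some t) : (t : ℤ) = s + (w.map BEvent.effect).sum := by
  induction w generalizing s with
  | nil => simp_all
  | cons e w ih =>
    obtain ⟨r, hr, h⟩ := run_cons_eq_some.1 h
    rw [ih h, (tauPT_delta_eq_some hr).2, List.map_cons, List.sum_cons, add_assoc]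

theorem run_replicate_trichotomy {e : BEvent} (hb : 1 ≤ b) (hs : s ≤ b)
    (h : run (tauPT b).delta s (List.replicate b e) = some t) :
    (e.effect = 0 ∧ t = s) ∨ (e.effect = 1 ∧ s = 0 ∧ t = b) ∨
      (e.effect = -1 ∧ s = b ∧ t = 0) := by
  have ht : t ≤ b := le_of_run_tauPT hs h
  have hst : (t : ℤ) = s + b * e.effect := by simpa using run_tauPT_eq_add_sum_effect h
  have hle : e.effect ≤ 1 := by by_contra! hlt; nlinarith
  have hge : -1 ≤ e.effect := by by_contra! hlt; nlinarith
  obtain he | he | he : e.effect = 0 ∨ e.effect = 1 ∨ e.effect = -1 := by omega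
  all_goals rw [he] at hst; omega

end PT

section Gadgets

variable {b s t : ℕ} {k o₀ o₁ z x : BEvent}

theorem effect_eq_of_run_H {s₀ : ℕ} (hb : 1 ≤ b) (hs₀ : s₀ ≤ b)
    (hinit : run (tauPT b).delta s₀ (List.replicate b k ++ List.replicate b z) = some s)
    (hfinal : run (tauPT b).delta s (o₀ :: (List.replicate b k ++ (List.replicate b z ++
      (List.replicate b o₁ ++ List.replicate b k)))) = some t)
    (hk : (tauPT b).delta s k = none) :
    (o₀.effect = b ∧ o₁.effect = 1) ∨ (o₀.effect = -b ∧ o₁.effect = -1) := by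
  simp only [run_cons_eq_some, run_append_eq_some] at hinit hfinal
  obtain ⟨s₁, k₁, z₁⟩ := hinit
  obtain ⟨s₂, ho₀, s₃, k₂, s₄, z₂, s₅, o₁_run, k₃⟩ := hfinal
  have ne_of_run {r r' : ℕ} (h : run (tauPT b).delta r (List.replicate b k) = some r') :
      s ≠ r := fun hsr => delta_ne_none_of_run_replicate hb h (hsr ▸ hk)
  have hs₀_ne := ne_of_run k₁
  have hs₂_ne := ne_of_run k₂
  have hs₅_ne := ne_of_run k₃
  obtain ⟨hs₂, ho₀⟩ := tauPT_delta_eq_some ho₀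
  have hs₁ := le_of_run_tauPT hs₀ k₁
  have hs₃ := le_of_run_tauPT hs₂ k₂
  have hs₄ := le_of_run_tauPT hs₃ z₂
  have k₁_cases := run_replicate_trichotomy hb hs₀ k₁
  have z₁_cases := run_replicate_trichotomy hb hs₁ z₁
  have k₂_cases := run_replicate_trichotomy hb hs₂ k₂
  have z₂_cases := run_replicate_trichotomy hb hs₃ z₂
  have o₁_cases := run_replicate_trichotomy hb hs₄ o₁_run
  -- `k` or `z` has nonzero effect because `s₀ ≠ s`, and the last such block fixes the end state.
  have hs₄_eq : s₄ = s := by omega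
  have hsweep : (s = 0 ∧ s₅ = b) ∨ (s = b ∧ s₅ = 0) := by omega
  have hs₂_eq : s₂ = s₅ := by omega
  omega

theorem effect_eq_neg_of_run_C (hb : 1 ≤ b) (ho₀ : o₀.effect = b) (ho₁ : o₁.effect = 1)
    (h : run (tauPT b).delta s (o₀ :: k :: List.replicate b o₁) = some t) :
    k.effect = -b := by
  simp only [run_cons_eq_some] at h
  obtain ⟨s₁, h₀, s₂, hk, h₁⟩ := h
  have h₀ := tauPT_delta_eq_some h₀
  have hk := tauPT_delta_eq_some hk
  have h₁ := run_replicate_trichotomy hb hk.1 h₁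
  have hs₁ : s₁ = b := by omega
  obtain rfl : s₂ = 0 := by omega
  rw [hs₁] at hk
  omega

theorem effect_eq_zero_of_run_F_G {s' t' : ℕ} (hs : s ≤ b) (hk : k.effect = -b)
    (ho₀ : o₀.effect = b) (hkz : run (tauPT b).delta s [k, z] = some t)
    (hzo : run (tauPT b).delta s' [z, o₀] = some t') : z.effect = 0 := by
  simp only [run_cons_eq_some, run_nil, Option.some.injEq, exists_eq_right] at hkz hzo
  obtain ⟨r, hk', hz⟩ := hkz
  obtain ⟨r', hz', ho⟩ := hzo
  have hk' := tauPT_delta_eq_some hk'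
  have hz := tauPT_delta_eq_some hz
  have hz' := tauPT_delta_eq_some hz'
  have ho := tauPT_delta_eq_some ho
  obtain rfl : r = 0 := by omega
  obtain rfl : r' = 0 := by omega
  omega

theorem effect_eq_zero_or_one_of_run_M (hb : 1 ≤ b) (hs : s ≤ b) (hk : k.effect = -b)
    (h : run (tauPT b).delta s (k :: List.replicate b x) = some t) :
    x.effect = 0 ∨ x.effect = 1 := by
  obtain ⟨r, hr, h⟩ := run_cons_eq_some.1 h
  have hr := tauPT_delta_eq_some hr
  obtain rfl : r = 0 := by omega
  have hx := run_replicate_trichotomy hb hr.1 h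
  omega

theorem sum_effect_eq_of_run_T {k' : BEvent} {w : List BEvent} (hs : s ≤ b)
    (hk : k.effect = -b) (hk' : k'.effect = -b)
    (h : run (tauPT b).delta s (k :: (w ++ [k'])) = some t) :
    (w.map BEvent.effect).sum = b := by
  simp only [run_cons_eq_some, run_append_eq_some, run_nil, Option.some.injEq,
    exists_eq_right] at h
  obtain ⟨s₁, h₁, s₂, hw, h₂⟩ := h
  have h₁ := tauPT_delta_eq_some h₁
  have h₂ := tauPT_delta_eq_some h₂
  have hs₂ : s₂ ≤ b := le_of_run_tauPT h₁.1 hw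
  obtain rfl : s₁ = 0 := by omega
  have hs₂_top : s₂ = b := by omega
  simpa [hs₂_top] using (run_tauPT_eq_add_sum_effect hw).symm

end Gadgets

theorem existsUnique_eq_one_of_sum_eq_one {ι : Type*} [Fintype ι] {f : ι → ℤ}
    (hf : ∀ i, f i = 0 ∨ f i = 1) (hsum : ∑ i, f i = 1) : ∃! i, f i = 1 := by
  have hite : ∀ i, f i = if f i = 1 then 1 else 0 := fun i => by
    rcases hf i with h | h <;> simp [h]
  rw [Finset.sum_congr rfl fun i _ => hite i, Finset.sum_boole] at hsum
  rw [Fintype.existsUnique_iff_card_one]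
  exact_mod_cast hsum

section Region

variable {b m : ℕ} {φ : CMSat m} {sup : (Σ i, Fin ((gadPT b φ i).length + 1)) → ℕ}
  {sig : PTEv m → BEvent}

theorem run_map_gadPT (hR : UnionRegion (tauPT b) (UPT b φ) sup sig) {i : PTIdx m}
    {s t : Fin ((gadPT b φ i).length + 1)} {u w v : List (PTEv m)}
    (hl : gadPT b φ i = u ++ (w ++ v)) (hs : (s : ℕ) = u.length)
    (ht : (t : ℕ) = u.length + w.length) :
    run (tauPT b).delta (sup ⟨i, s⟩) (w.map sig) = some (sup ⟨i, t⟩) :=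
  hR.run_map (run_linOfList hl hs ht)

theorem exists_run_gadPT (hR : UnionRegion (tauPT b) (UPT b φ) sup sig) (i : PTIdx m) :
    ∃ s t, s ≤ b ∧ run (tauPT b).delta s ((gadPT b φ i).map sig) = some t :=
  ⟨_, _, hR.1 _, run_map_gadPT hR (i := i) (s := 0) (t := Fin.last _) (u := []) (v := [])
    (by simp) rfl (by simp)⟩

theorem effect_kk (hb : 1 ≤ b) (hR : UnionRegion (tauPT b) (UPT b φ) sup sig)
    (ho₀ : (sig .o0).effect = b) (ho₁ : (sig .o1).effect = 1) (j : Fin 4) :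
    (sig (.kk j)).effect = -b := by
  obtain ⟨s, t, -, h⟩ := exists_run_gadPT hR (.C j)
  simp only [gadPT, List.map_cons, List.map_replicate] at h
  exact effect_eq_neg_of_run_C hb ho₀ ho₁ h

theorem effect_z (hb : 1 ≤ b) (hR : UnionRegion (tauPT b) (UPT b φ) sup sig)
    (ho₀ : (sig .o0).effect = b) (ho₁ : (sig .o1).effect = 1) (j : Fin (2 * m)) :
    (sig (.z j)).effect = 0 := by
  obtain ⟨s, t, hs, hF⟩ := exists_run_gadPT hR (.F j)
  obtain ⟨s', t', -, hG⟩ := exists_run_gadPT hR (.G j)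
  exact effect_eq_zero_of_run_F_G hs (effect_kk hb hR ho₀ ho₁ 0) ho₀ hF hG

theorem effect_X (hb : 1 ≤ b) (hR : UnionRegion (tauPT b) (UPT b φ) sup sig)
    (ho₀ : (sig .o0).effect = b) (ho₁ : (sig .o1).effect = 1) (v : Fin m) :
    (sig (.X v)).effect = 0 ∨ (sig (.X v)).effect = 1 := by
  obtain ⟨s, t, hs, h⟩ := exists_run_gadPT hR (.M v)
  simp only [gadPT, List.map_cons, List.map_replicate] at h
  exact effect_eq_zero_or_one_of_run_M hb hs (effect_kk hb hR ho₀ ho₁ 1) h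

theorem sum_effect_X_clause (hb : 1 ≤ b) (hR : UnionRegion (tauPT b) (UPT b φ) sup sig)
    (ho₀ : (sig .o0).effect = b) (ho₁ : (sig .o1).effect = 1) (i : Fin m) :
    ∑ j, (sig (.X (φ.cl i j))).effect = 1 := by
  obtain ⟨s, t, hs, h⟩ := exists_run_gadPT hR (.T i)
  -- Regroup the word of `T_i` as `k₂ :: (w ++ [k₃])`.
  simp only [gadPT, ← List.cons_append, ← List.append_assoc _ _ [PTEv.kk 3]] at h
  simp only [List.cons_append, List.map_cons, List.map_append, List.map_replicate,
    List.map_nil] at h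
  have hkk := effect_kk hb hR ho₀ ho₁
  have hsum := sum_effect_eq_of_run_T hs (hkk 2) (hkk 3) h
  simp only [List.map_append, List.map_cons, List.map_replicate, List.sum_append, List.sum_cons,
    List.sum_replicate, effect_z hb hR ho₀ ho₁, nsmul_eq_mul] at hsum
  have hb_ne : (b : ℤ) ≠ 0 := by omega
  rw [Fin.sum_univ_three]
  exact mul_left_cancel₀ hb_ne (by linarith)

theorem oneInThreeModel_of_effect (hb : 1 ≤ b)
    (hR : UnionRegion (tauPT b) (UPT b φ) sup sig)
    (ho₀ : (sig .o0).effect = b) (ho₁ : (sig .o1).effect = 1) :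
    OneInThreeModel φ {v | (sig (.X v)).effect = 1} := fun i =>
  existsUnique_eq_one_of_sum_eq_one (fun j => effect_X hb hR ho₀ ho₁ (φ.cl i j))
    (sum_effect_X_clause hb hR ho₀ ho₁ i)

end Region

/-- The state `h_{0,2b}` of the gadget `H₀`, at which `k` is to be separated. -/
def keyState (b : ℕ) {m : ℕ} (φ : CMSat m) : Fin ((gadPT b φ .H).length + 1) :=
  ⟨2 * b, by simp [gadPT]; omega⟩

theorem gadPT_H_eq_append (b : ℕ) {m : ℕ} (φ : CMSat m) :
    gadPT b φ .H = (List.replicate b .k ++ List.replicate b .zz) ++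
      .o0 :: (List.replicate b .k ++ (List.replicate b .zz ++
        (List.replicate b .o1 ++ List.replicate b .k))) := by
  simp [gadPT]

theorem delta_keyState_k (b : ℕ) {m : ℕ} (φ : CMSat m) :
    (UPT b φ .H).delta (keyState b φ) .k = none := by
  refine Option.eq_none_iff_forall_ne_some.2 fun t ht => ?_
  have hk := (linOfList_delta_eq_some_iff.1 ht).1
  simp [gadPT_H_eq_append, keyState, two_mul] at hk

theorem effect_o0_o1_of_solves_keyState {b m : ℕ} {φ : CMSat m}
    {sup : (Σ i, Fin ((gadPT b φ i).length + 1)) → ℕ} {sig : PTEv m → BEvent} (hb : 1 ≤ b)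
    (hR : UnionRegion (tauPT b) (UPT b φ) sup sig)
    (hk : (tauPT b).delta (sup ⟨.H, keyState b φ⟩) (sig .k) = none) :
    ((sig .o0).effect = b ∧ (sig .o1).effect = 1) ∨
      ((sig .o0).effect = -b ∧ (sig .o1).effect = -1) := by
  have hl := gadPT_H_eq_append b φ
  have hinit := run_map_gadPT hR (s := 0) (t := keyState b φ) (u := []) hl rfl
    (by simp [keyState, two_mul])
  have hfinal := run_map_gadPT hR (s := keyState b φ) (t := Fin.last _) (v := [])
    (hl.trans (by rw [List.append_nil])) (by simp [keyState, two_mul])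
    (by rw [Fin.val_last, hl, List.length_append])
  simp only [List.map_cons, List.map_append, List.map_replicate] at hinit hfinal
  exact effect_eq_of_run_H hb (hR.1 _) hinit hfinal hk

theorem stmt8_general {b : ℕ} (hb : 1 ≤ b) {m : ℕ} {φ : CMSat m}
    {sup : (Σ i, Fin ((gadPT b φ i).length + 1)) → ℕ} {sig : PTEv m → BEvent}
    (hR : UnionRegion (tauPT b) (UPT b φ) sup sig)
    (hk : (tauPT b).delta (sup ⟨.H, keyState b φ⟩) (sig .k) = none) :
    ∃ M : Set (Fin m), OneInThreeModel φ M := by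
  rcases effect_o0_o1_of_solves_keyState hb hR hk with ⟨ho₀, ho₁⟩ | ⟨ho₀, ho₁⟩
  · exact ⟨_, oneInThreeModel_of_effect hb hR ho₀ ho₁⟩
  · exact ⟨_, oneInThreeModel_of_effect hb hR.complement
      (by rw [BEvent.effect_opposite, ho₀, neg_neg]) (by rw [BEvent.effect_opposite, ho₁, neg_neg])⟩

/-- If the union `U_{τ_PT^b}(φ)` has the `τ_PT^b`-ESSP, then the
cubic monotone one-in-three 3-SAT instance `φ` has a one-in-three model. -/
theorem stmt8 (b : ℕ) (hb : 1 ≤ b) {m : ℕ} (φ : CMSat m)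
    (h : UnionHasESSP (tauPT b) (UPT b φ)) :
    ∃ M : Set (Fin m), OneInThreeModel φ M := by
  obtain ⟨sup, sig, hR, hk⟩ := h .k .H (keyState b φ) (delta_keyState_k b φ)
  exact stmt8_general hb hR hk

end PNS
end

section
/- Let b ≥ 2 be an integer, τ ∈ {τ_ZPT^b, τ_ZPPT^b}, and let φ be an instance of cubic monotone one-in-three 3-SAT. If the union U_Z(φ) has the τ-ESSP, then φ has a one-in-three model. -/
namespace PNS

/-- Index set of the gadgets of the union `U_Z(φ)`. -/
inductive ZIdx (m : ℕ) : Type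
  | H : ZIdx m
  | F : Fin m → ZIdx m
  | G : Fin m → ZIdx m
  | T : Fin m → ZIdx m

/-- Events of the union `U_Z(φ)`. -/
inductive ZEv (m : ℕ) : Type
  | k : ZEv m
  | u : ZEv m
  | zz : ZEv m
  | v : Fin m → ZEv m
  | X : Fin m → ZEv m
  deriving DecidableEq

/-- The gadget `H₃`: states `h_{3,0,0}, …, h_{3,0,b}` (`Sum.inl`) and
`h_{3,1,0}, …, h_{3,1,b-1}` (`Sum.inr`), with edges
`h_{3,0,0} −k^b→ h_{3,0,b}`, `h_{3,0,0} −u→ h_{3,1,0} −k^{b-1}→ h_{3,1,b-1} −z→ h_{3,0,b}`. -/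
def H3 (b m : ℕ) : TS ((Fin (b + 1)) ⊕ (Fin b)) (ZEv m) where
  init := Sum.inl ⟨0, Nat.succ_pos b⟩
  delta s e :=
    match s, e with
    | Sum.inl i, ZEv.k =>
        if h : (i : ℕ) < b then some (Sum.inl ⟨(i : ℕ) + 1, Nat.succ_lt_succ h⟩) else none
    | Sum.inl i, ZEv.u =>
        if h : (i : ℕ) = 0 ∧ 0 < b then some (Sum.inr ⟨0, h.2⟩) else none
    | Sum.inr i, ZEv.k =>
        if h : (i : ℕ) + 1 < b then some (Sum.inr ⟨(i : ℕ) + 1, h⟩) else none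
    | Sum.inr i, ZEv.zz =>
        if (i : ℕ) = b - 1 then some (Sum.inl ⟨b, Nat.lt_succ_self b⟩) else none
    | _, _ => none

/-- The gadget `F_j`: states `f_{j,0,0}, …, f_{j,0,b}` (`Sum.inl`) and
`f_{j,1,0}, …, f_{j,1,b-1}` (`Sum.inr`), with edges
`f_{j,0,0} −k^b→ f_{j,0,b}`, `f_{j,0,0} −v_j→ f_{j,1,0} −k^{b-1}→ f_{j,1,b-1} −X_j→ f_{j,0,b}`. -/
def Fgad (b : ℕ) {m : ℕ} (j : Fin m) : TS ((Fin (b + 1)) ⊕ (Fin b)) (ZEv m) where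
  init := Sum.inl ⟨0, Nat.succ_pos b⟩
  delta s e :=
    match s, e with
    | Sum.inl i, ZEv.k =>
        if h : (i : ℕ) < b then some (Sum.inl ⟨(i : ℕ) + 1, Nat.succ_lt_succ h⟩) else none
    | Sum.inl i, ZEv.v j' =>
        if h : (i : ℕ) = 0 ∧ 0 < b ∧ j = j' then some (Sum.inr ⟨0, h.2.1⟩) else none
    | Sum.inr i, ZEv.k =>
        if h : (i : ℕ) + 1 < b then some (Sum.inr ⟨(i : ℕ) + 1, h⟩) else none
    | Sum.inr i, ZEv.X j' =>
        if (i : ℕ) = b - 1 ∧ j = j' then some (Sum.inl ⟨b, Nat.lt_succ_self b⟩) else none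
    | _, _ => none

/-- The label sequence of the linear gadget `G_j`. -/
def gadG (b : ℕ) {m : ℕ} (j : Fin m) : List (ZEv m) :=
  List.replicate b .k ++ [.X j]

/-- The label sequence of the linear gadget `T_i`. -/
def gadT (b : ℕ) {m : ℕ} (φ : CMSat m) (i : Fin m) : List (ZEv m) :=
  List.replicate b .k ++
    [.X (φ.cl i 0), .X (φ.cl i 1), .X (φ.cl i 2), .zz] ++ List.replicate b .k

/-- The state sets of the gadgets of `U_Z(φ)`. -/
def ZSt (b : ℕ) {m : ℕ} (φ : CMSat m) : ZIdx m → Type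
  | .H => (Fin (b + 1)) ⊕ (Fin b)
  | .F _ => (Fin (b + 1)) ⊕ (Fin b)
  | .G j => Fin ((gadG b j).length + 1)
  | .T i => Fin ((gadT b φ i).length + 1)

/-- The union `U_Z(φ)`. -/
noncomputable def UZ (b : ℕ) {m : ℕ} (φ : CMSat m) : ∀ i : ZIdx m, TS (ZSt b φ i) (ZEv m)
  | .H => H3 b m
  | .F j => Fgad b j
  | .G j => linOfList (gadG b j) ZEv.k
  | .T i => linOfList (gadT b φ i) ZEv.k

/-!
Every event `e` of the type shifts supports by a fixed amount modulo `b + 1`, whatever its kind, so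
the shift of a path is the sum of the shifts of its labels. If a region stops `k` from firing at
`h_{3,1,b-1}`, then `k` is `(0,1)` or `(1,0)`, and every path `k^b` leads from one end `a` of
`{0,…,b}` to the other end `c`, where `k` has shift `ε = a - c = ±1`. Then `H₃` forces shift `0` on
`z`, `F_j` forces shift `0` or `ε` on `X_j`, and `T_i`, in which the three variable edges and `z`
lead from `c` to `a`, forces the three shifts of the variables of `ζᵢ` to add up to `ε`. As `ε` has
order `b + 1 ≥ 3`, exactly one of the three equals `ε`.
-/

/-- The path `s −l→ s'` labeled by the word `l` in the partial transition function `δ`; it applies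
both to transition systems and to types of nets. -/
def IsRun {S E : Type*} (δ : S → E → Option S) (s : S) (l : List E) (s' : S) : Prop :=
  l.foldlM δ s = some s'

section Runs

variable {S E S' E' : Type*} {δ : S → E → Option S} {δ' : S' → E' → Option S'}

lemma isRun_nil {s s' : S} : IsRun δ s [] s' ↔ s = s' := by
  simp [IsRun]

lemma isRun_cons {s s' : S} {e : E} {l : List E} :
    IsRun δ s (e :: l) s' ↔ ∃ t, δ s e = some t ∧ IsRun δ t l s' := by
  simp [IsRun, Option.bind_eq_some_iff]

lemma isRun_append {s s' : S} {l₁ l₂ : List E} :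
    IsRun δ s (l₁ ++ l₂) s' ↔ ∃ t, IsRun δ s l₁ t ∧ IsRun δ t l₂ s' := by
  simp [IsRun, Option.bind_eq_some_iff]

lemma isRun_singleton {s s' : S} {e : E} : IsRun δ s [e] s' ↔ δ s e = some s' := by
  simp [isRun_cons, isRun_nil]

lemma isRun_replicate_succ {s s' : S} {e : E} {n : ℕ} :
    IsRun δ s (List.replicate (n + 1) e) s' ↔
      ∃ t, IsRun δ s (List.replicate n e) t ∧ δ t e = some s' := by
  simp only [List.replicate_succ', isRun_append, isRun_singleton]

lemma IsRun.map {s s' : S} {l : List E} (f : S → S') (g : E → E')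
    (hδ : ∀ s e s', δ s e = some s' → δ' (f s) (g e) = some (f s')) (h : IsRun δ s l s') :
    IsRun δ' (f s) (l.map g) (f s') := by
  induction l generalizing s with
  | nil => exact isRun_nil.2 (congrArg f (isRun_nil.1 h))
  | cons e l ih =>
    obtain ⟨t, hst, hts'⟩ := isRun_cons.1 h
    exact isRun_cons.2 ⟨f t, hδ _ _ _ hst, ih hts'⟩

lemma isRun_of_forall_getElem {l : List E} {n : ℕ} (hl : l.length = n) (s : Fin (n + 1) → S)
    (h : ∀ i : Fin n, δ (s i.castSucc) l[i] = some (s i.succ)) :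
    IsRun δ (s 0) l (s (Fin.last n)) := by
  induction l generalizing n with
  | nil => subst hl; exact isRun_nil.2 rfl
  | cons e l ih =>
    subst hl
    exact isRun_cons.2 ⟨s 1, h 0, ih rfl (fun i => s i.succ) fun i => h i.succ⟩

lemma isRun_replicate_of_forall {e : E} {n : ℕ} (s : Fin (n + 1) → S)
    (h : ∀ i : Fin n, δ (s i.castSucc) e = some (s i.succ)) :
    IsRun δ (s 0) (List.replicate n e) (s (Fin.last n)) :=
  isRun_of_forall_getElem List.length_replicate s fun i => by simpa using h i

end Runs

/-- The amount, modulo `b + 1`, by which an event of `τ_ZPT^b` changes the state it fires in. -/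
def BEvent.shift (b : ℕ) : BEvent → ZMod (b + 1)
  | .pair m n => n - m
  | .num z => z

section TypeOfNets

variable {b x y : ℕ} {e : BEvent}

lemma deltaZPT_pair_eq_some {p q : ℕ} :
    deltaZPT b x (.pair p q) = some y ↔ p ≤ x ∧ y + p = x + q ∧ y ≤ b := by
  simp only [deltaZPT, Option.ite_none_right_eq_some, Option.some.injEq]
  omega

lemma deltaZPT_pair_eq_none {p q : ℕ} :
    deltaZPT b x (.pair p q) = none ↔ x < p ∨ b + p < x + q := by
  simp only [deltaZPT, ite_eq_right_iff, reduceCtorEq, imp_false]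
  omega

lemma le_of_deltaZPT (h : deltaZPT b x e = some y) : y ≤ b := by
  cases e with
  | pair p q => exact (deltaZPT_pair_eq_some.1 h).2.2
  | num z =>
    obtain rfl : (x + z) % (b + 1) = y := Option.some.inj h
    exact Nat.le_of_lt_succ (Nat.mod_lt _ b.succ_pos)

lemma cast_eq_add_shift (h : deltaZPT b x e = some y) : (y : ZMod (b + 1)) = x + e.shift b := by
  cases e with
  | pair p q =>
    have hy := congrArg (Nat.cast : ℕ → ZMod (b + 1)) (deltaZPT_pair_eq_some.1 h).2.1
    push_cast at hy
    rw [BEvent.shift]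
    linear_combination hy
  | num z =>
    obtain rfl : (x + z) % (b + 1) = y := Option.some.inj h
    simp [BEvent.shift]

lemma IsRun.le {l : List BEvent} (h : IsRun (deltaZPT b) x l y) (hx : x ≤ b) : y ≤ b := by
  induction l generalizing x with
  | nil => exact isRun_nil.1 h ▸ hx
  | cons e l ih =>
    obtain ⟨t, hxt, hty⟩ := isRun_cons.1 h
    exact ih hty (le_of_deltaZPT hxt)

lemma IsRun.cast_eq_add_sum_shift {l : List BEvent} (h : IsRun (deltaZPT b) x l y) :
    (y : ZMod (b + 1)) = x + (l.map (BEvent.shift b)).sum := by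
  induction l generalizing x with
  | nil => simp [isRun_nil.1 h]
  | cons e l ih =>
    obtain ⟨t, hxt, hty⟩ := isRun_cons.1 h
    rw [ih hty, cast_eq_add_shift hxt, List.map_cons, List.sum_cons, add_assoc]

lemma IsRun.add_mul_eq_of_pair {p q n : ℕ}
    (h : IsRun (deltaZPT b) x (List.replicate n (.pair p q)) y) : y + n * p = x + n * q := by
  induction n generalizing y with
  | zero => simp [isRun_nil.1 h]
  | succ n ih =>
    obtain ⟨t, hxt, hty⟩ := isRun_replicate_succ.1 h
    linarith [ih hxt, (deltaZPT_pair_eq_some.1 hty).2.1]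

lemma IsRun.le_of_pair {p q n : ℕ} (hn : 0 < n)
    (h : IsRun (deltaZPT b) x (List.replicate n (.pair p q)) y) : p ≤ x ∧ q ≤ y ∧ y ≤ b := by
  obtain ⟨n, rfl⟩ := Nat.exists_eq_succ_of_ne_zero hn.ne'
  obtain ⟨s, hxs, -⟩ := isRun_cons.1 h
  obtain ⟨t, -, hty⟩ := isRun_replicate_succ.1 h
  have hs := deltaZPT_pair_eq_some.1 hxs
  have ht := deltaZPT_pair_eq_some.1 hty
  omega

/-- `UnitStep b e a c`: the event `e` moves by single steps from the end `a` of `{0,…,b}` to the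
opposite end `c`. -/
inductive UnitStep (b : ℕ) : BEvent → ℕ → ℕ → Prop
  | up : UnitStep b (.pair 0 1) 0 b
  | down : UnitStep b (.pair 1 0) b 0

lemma exists_unitStep_pair {p q : ℕ} (hb : 0 < b) (hx : x ≤ b) (hpq : p ≠ q)
    (h : IsRun (deltaZPT b) x (List.replicate b (.pair p q)) y) :
    ∃ a c, UnitStep b (.pair p q) a c := by
  obtain ⟨hp, hq, hy⟩ := h.le_of_pair hb
  have hxy := h.add_mul_eq_of_pair
  obtain hlt | hlt := hpq.lt_or_gt
  · obtain ⟨d, rfl⟩ := Nat.exists_eq_add_of_lt hlt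
    have hd : d = 0 := by nlinarith
    subst hd
    obtain rfl : p = 0 := by nlinarith
    exact ⟨0, b, .up⟩
  · obtain ⟨d, rfl⟩ := Nat.exists_eq_add_of_lt hlt
    have hd : d = 0 := by nlinarith
    subst hd
    obtain rfl : q = 0 := by nlinarith
    exact ⟨b, 0, .down⟩

lemma exists_unitStep_of_stuck {x' y' : ℕ} (hb : 2 ≤ b) (hx : x ≤ b)
    (hxy : IsRun (deltaZPT b) x (List.replicate b e) y)
    (hxy' : IsRun (deltaZPT b) x' (List.replicate (b - 1) e) y') (hy' : deltaZPT b y' e = none) :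
    ∃ a c, UnitStep b e a c := by
  cases e with
  | num z => cases hy'
  | pair p q =>
    refine exists_unitStep_pair (by omega) hx ?_ hxy
    rintro rfl
    -- An event `(p, p)` cannot stop: `b - 1 ≥ 1` firings leave the state unchanged.
    obtain ⟨-, hp, hle⟩ := hxy'.le_of_pair (by omega)
    have hstuck := deltaZPT_pair_eq_none.1 hy'
    omega

namespace UnitStep

variable {a c : ℕ}

lemma eq_of_isRun (h : UnitStep b e a c) (hx : x ≤ b)
    (hxy : IsRun (deltaZPT b) x (List.replicate b e) y) : x = a ∧ y = c := by
  have hy := hxy.le hx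
  cases h <;> have := hxy.add_mul_eq_of_pair <;> omega

lemma eq_of_stuck (h : UnitStep b e a c) (hx : x ≤ b) (hstuck : deltaZPT b x e = none) :
    x = c := by
  cases h <;> have := deltaZPT_pair_eq_none.1 hstuck <;> omega

lemma shift_eq (h : UnitStep b e a c) : e.shift b = a - c := by
  have hb : (b : ZMod (b + 1)) + 1 = 0 := by exact_mod_cast ZMod.natCast_self (b + 1)
  cases h
  · simp only [BEvent.shift, Nat.cast_one, Nat.cast_zero]; linear_combination hb
  · simp only [BEvent.shift, Nat.cast_one, Nat.cast_zero]; linear_combination -hb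

lemma addOrderOf_shift (h : UnitStep b e a c) : addOrderOf (e.shift b) = b + 1 := by
  cases h <;> simp [BEvent.shift, ZMod.addOrderOf_one]

lemma sub_eq_zero_or_shift (h : UnitStep b e a c) (hb : 0 < b) (hx : x ≤ b)
    (hxy : IsRun (deltaZPT b) x (List.replicate (b - 1) e) y) :
    (c : ZMod (b + 1)) - y = 0 ∨ (c : ZMod (b + 1)) - y = e.shift b := by
  obtain hstuck | ⟨t, ht⟩ := Option.eq_none_or_eq_some (deltaZPT b y e)
  · left
    rw [h.eq_of_stuck (hxy.le hx) hstuck, sub_self]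
  · right
    have hxt : IsRun (deltaZPT b) x (List.replicate b e) t := by
      have hrun := isRun_replicate_succ.2 ⟨y, hxy, ht⟩
      rwa [Nat.sub_add_cancel hb] at hrun
    rw [← (h.eq_of_isRun hx hxt).2, cast_eq_add_shift ht, add_sub_cancel_left]

end UnitStep

end TypeOfNets

lemma existsUnique_eq_of_sum_eq {ι G : Type*} [Fintype ι] [AddCancelCommMonoid G] {s : ι → G}
    {ε : G} (hs : ∀ j, s j = 0 ∨ s j = ε) (hsum : ∑ j, s j = ε) (hε : ε ≠ 0)
    (hcard : Fintype.card ι ≤ addOrderOf ε) : ∃! j, s j = ε := by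
  classical
  have hcount : (Finset.univ.filter (s · = ε)).card • ε = 1 • ε := by
    rw [one_nsmul, ← Finset.sum_const, Finset.sum_filter]
    refine Eq.trans (Finset.sum_congr rfl fun j _ => ?_) hsum
    obtain hj | hj := hs j <;> simp [hj, hε.symm]
  have hmod := nsmul_eq_nsmul_iff_modEq.1 hcount
  have hne_one : addOrderOf ε ≠ 1 := mt AddMonoid.addOrderOf_eq_one_iff.1 hε
  have hle := (Finset.card_le_univ (Finset.univ.filter (s · = ε))).trans hcard
  have hone : (Finset.univ.filter (s · = ε)).card = 1 := by
    obtain heq | hlt := hle.eq_or_lt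
    · rw [heq, Nat.ModEq, Nat.mod_self, eq_comm, ← Nat.dvd_iff_mod_eq_zero, Nat.dvd_one] at hmod
      exact absurd hmod hne_one
    · exact hmod.eq_of_lt_of_lt hlt (by omega)
  obtain ⟨j, hj⟩ := Finset.card_eq_one.1 hone
  have hiff : ∀ i, s i = ε ↔ i = j := by simpa [Finset.ext_iff] using hj
  exact ⟨j, (hiff j).2 rfl, fun i => (hiff i).1⟩

section Gadgets

variable {b m : ℕ}

lemma isRun_linOfList {E : Type} (l : List E) (d : E) :
    IsRun (linOfList l d).delta 0 l (Fin.last l.length) :=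
  isRun_of_forall_getElem rfl id fun i => by simp [linOfList, linTS, Fin.succ, Fin.castSucc]

lemma H3_isRun_top : IsRun (H3 b m).delta (.inl 0) (List.replicate b .k) (.inl (Fin.last b)) :=
  isRun_replicate_of_forall Sum.inl fun i => by simp [H3, Fin.succ]

lemma H3_isRun_bottom (hb : 0 < b) :
    IsRun (H3 b m).delta (.inr ⟨0, hb⟩) (List.replicate (b - 1) .k)
      (.inr ⟨b - 1, Nat.sub_one_lt_of_lt hb⟩) :=
  isRun_replicate_of_forall (fun i => Sum.inr (i.cast (Nat.sub_add_cancel hb))) fun i => by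
    simp [H3, Fin.succ, Nat.add_lt_of_lt_sub i.2]

lemma H3_delta_zz (hb : 0 < b) :
    (H3 b m).delta (.inr ⟨b - 1, Nat.sub_one_lt_of_lt hb⟩) .zz = some (.inl (Fin.last b)) := by
  simp [H3, Fin.last]

lemma H3_delta_k_eq_none (hb : 0 < b) :
    (H3 b m).delta (.inr ⟨b - 1, Nat.sub_one_lt_of_lt hb⟩) .k = none := by
  simp [H3, Nat.sub_add_cancel hb]

lemma Fgad_isRun_top (j : Fin m) :
    IsRun (Fgad b j).delta (.inl 0) (List.replicate b .k) (.inl (Fin.last b)) :=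
  isRun_replicate_of_forall Sum.inl fun i => by simp [Fgad, Fin.succ]

lemma Fgad_isRun_bottom (hb : 0 < b) (j : Fin m) :
    IsRun (Fgad b j).delta (.inr ⟨0, hb⟩) (List.replicate (b - 1) .k)
      (.inr ⟨b - 1, Nat.sub_one_lt_of_lt hb⟩) :=
  isRun_replicate_of_forall (fun i => Sum.inr (i.cast (Nat.sub_add_cancel hb))) fun i => by
    simp [Fgad, Fin.succ, Nat.add_lt_of_lt_sub i.2]

lemma Fgad_delta_X (hb : 0 < b) (j : Fin m) :
    (Fgad b j).delta (.inr ⟨b - 1, Nat.sub_one_lt_of_lt hb⟩) (.X j) = some (.inl (Fin.last b)) := by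
  simp [Fgad, Fin.last]

end Gadgets

/-- The property of a type of nets shared by `τ_ZPT^b` and `τ_ZPPT^b` that the argument needs: its
states and transitions are those of `τ_ZPT^b`, while its set of events is arbitrary. -/
structure IsZExtended (b : ℕ) (τ : NetType) : Prop where
  le_of_mem : ∀ s ∈ τ.states, s ≤ b
  delta_eq : τ.delta = deltaZPT b

namespace UnionRegion

section Union

variable {b : ℕ} {τ : NetType} {ι E : Type} {S : ι → Type} {A : ∀ i, TS (S i) E}
  {sup : (Σ i, S i) → ℕ} {sig : E → BEvent}

lemma le (hR : UnionRegion τ A sup sig) (hτ : IsZExtended b τ) (s : Σ i, S i) : sup s ≤ b :=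
  hτ.le_of_mem _ (hR.1 s)

lemma delta_eq_some (hR : UnionRegion τ A sup sig) (hτ : IsZExtended b τ) {i : ι} {s s' : S i}
    {e : E} (h : (A i).delta s e = some s') :
    deltaZPT b (sup ⟨i, s⟩) (sig e) = some (sup ⟨i, s'⟩) :=
  hτ.delta_eq ▸ hR.2.2 i s e s' h

lemma isRun (hR : UnionRegion τ A sup sig) (hτ : IsZExtended b τ) {i : ι} {s s' : S i}
    {l : List E} (h : IsRun (A i).delta s l s') :
    IsRun (deltaZPT b) (sup ⟨i, s⟩) (l.map sig) (sup ⟨i, s'⟩) :=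
  h.map (fun s => sup ⟨i, s⟩) sig fun _ _ _ => hR.delta_eq_some hτ

lemma isRun_replicate (hR : UnionRegion τ A sup sig) (hτ : IsZExtended b τ) {i : ι} {s s' : S i}
    {e : E} {n : ℕ} (h : IsRun (A i).delta s (List.replicate n e) s') :
    IsRun (deltaZPT b) (sup ⟨i, s⟩) (List.replicate n (sig e)) (sup ⟨i, s'⟩) :=
  List.map_replicate ▸ hR.isRun hτ h

end Union

section UZ

variable {b m : ℕ} {τ : NetType} {φ : CMSat m} {sup : (Σ i, ZSt b φ i) → ℕ}
  {sig : ZEv m → BEvent} {a c : ℕ}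

lemma exists_unitStep (hR : UnionRegion τ (UZ b φ) sup sig) (hτ : IsZExtended b τ) (hb : 2 ≤ b)
    (hk : τ.delta (sup ⟨.H, .inr ⟨b - 1, Nat.sub_one_lt_of_lt hb⟩⟩) (sig .k) = none) :
    ∃ a c, UnitStep b (sig .k) a c :=
  exists_unitStep_of_stuck hb (hR.le hτ _) (hR.isRun_replicate hτ (i := .H) H3_isRun_top)
    (hR.isRun_replicate hτ (i := .H) (H3_isRun_bottom (by omega))) (hτ.delta_eq ▸ hk)

lemma shift_zz (hR : UnionRegion τ (UZ b φ) sup sig) (hτ : IsZExtended b τ) (hb : 0 < b)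
    (hstep : UnitStep b (sig .k) a c)
    (hk : τ.delta (sup ⟨.H, .inr ⟨b - 1, Nat.sub_one_lt_of_lt hb⟩⟩) (sig .k) = none) :
    (sig .zz).shift b = 0 := by
  have hsource := hstep.eq_of_stuck (hR.le hτ _) (hτ.delta_eq ▸ hk)
  have htarget := (hstep.eq_of_isRun (hR.le hτ _)
    (hR.isRun_replicate hτ (i := .H) H3_isRun_top)).2
  have hz := cast_eq_add_shift (hR.delta_eq_some hτ (i := .H) (H3_delta_zz hb))
  rw [hsource, htarget] at hz
  exact left_eq_add.1 hz

lemma shift_X (hR : UnionRegion τ (UZ b φ) sup sig) (hτ : IsZExtended b τ) (hb : 0 < b)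
    (hstep : UnitStep b (sig .k) a c) (j : Fin m) :
    (sig (.X j)).shift b = 0 ∨ (sig (.X j)).shift b = (sig .k).shift b := by
  have htarget := (hstep.eq_of_isRun (hR.le hτ _)
    (hR.isRun_replicate hτ (i := .F j) (Fgad_isRun_top j))).2
  have hX := cast_eq_add_shift (hR.delta_eq_some hτ (i := .F j) (Fgad_delta_X hb j))
  rw [htarget, ← sub_eq_iff_eq_add'] at hX
  exact hX ▸ hstep.sub_eq_zero_or_shift hb (hR.le hτ _)
    (hR.isRun_replicate hτ (i := .F j) (Fgad_isRun_bottom hb j))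

lemma sum_shift_X (hR : UnionRegion τ (UZ b φ) sup sig) (hτ : IsZExtended b τ)
    (hstep : UnitStep b (sig .k) a c) (hz : (sig .zz).shift b = 0) (i : Fin m) :
    ∑ j, (sig (.X (φ.cl i j))).shift b = (sig .k).shift b := by
  have hrun := hR.isRun hτ (i := .T i) (isRun_linOfList (gadT b φ i) .k)
  simp only [gadT, List.map_append, List.map_replicate, isRun_append] at hrun
  obtain ⟨y, ⟨x, hx, hxy⟩, hy⟩ := hrun
  have hx₀ := hR.le hτ ⟨.T i, (0 : Fin ((gadT b φ i).length + 1))⟩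
  obtain rfl := (hstep.eq_of_isRun hx₀ hx).2
  obtain rfl := (hstep.eq_of_isRun (hxy.le (hx.le hx₀)) hy).1
  rw [hstep.shift_eq, hxy.cast_eq_add_sum_shift]
  simp [Fin.sum_univ_three, hz, add_assoc]

end UZ

end UnionRegion

theorem stmt12_general {b : ℕ} (hb : 2 ≤ b) {τ : NetType} (hτ : IsZExtended b τ) {m : ℕ}
    {φ : CMSat m} {sup : (Σ i, ZSt b φ i) → ℕ} {sig : ZEv m → BEvent}
    (hR : UnionRegion τ (UZ b φ) sup sig)
    (hk : τ.delta (sup ⟨.H, .inr ⟨b - 1, Nat.sub_one_lt_of_lt hb⟩⟩) (sig .k) = none) :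
    OneInThreeModel φ {j | (sig (.X j)).shift b = (sig .k).shift b} := by
  intro i
  have hb₀ : 0 < b := by omega
  obtain ⟨a, c, hstep⟩ := hR.exists_unitStep hτ hb hk
  have horder := hstep.addOrderOf_shift
  refine existsUnique_eq_of_sum_eq (fun j => hR.shift_X hτ hb₀ hstep (φ.cl i j))
    (hR.sum_shift_X hτ hstep (hR.shift_zz hτ hb₀ hstep hk) i) ?_ ?_
  · intro hzero
    rw [hzero, addOrderOf_zero] at horder
    omega
  · rw [horder, Fintype.card_fin]
    omega

/-- Let `b ≥ 2` and `τ ∈ {τ_ZPT^b, τ_ZPPT^b}`.  If the union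
`U_Z(φ)` has the `τ`-ESSP, then the cubic monotone one-in-three 3-SAT instance `φ`
has a one-in-three model. -/
theorem stmt12 (b : ℕ) (hb : 2 ≤ b) (τ : NetType) (hτ : τ = tauZPT b ∨ τ = tauZPPT b)
    {m : ℕ} (φ : CMSat m) (h : UnionHasESSP τ (UZ b φ)) :
    ∃ M : Set (Fin m), OneInThreeModel φ M := by
  have hτZ : IsZExtended b τ := by
    rcases hτ with rfl | rfl <;> exact ⟨fun _ => id, rfl⟩
  obtain ⟨sup, sig, hR, hk⟩ := h .k .H _ (H3_delta_k_eq_none (by omega))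
  exact ⟨_, stmt12_general hb hτZ hR hk⟩

end PNS
end

section
/- Let b ≥ 2 be an integer, τ ∈ {τ_ZPT^b, τ_ZPPT^b}, and let φ be an instance of cubic monotone one-in-three 3-SAT. If φ has a one-in-three model, then the union U_Z(φ) has the τ-ESSP and the τ-SSP. -/
namespace PNS

/-! Over `ZMod (b + 1)`, a region that uses group events only is a potential: every edge adds the
weight of its event. Such potentials separate all states of `U_Z(φ)`.

An event `e ≠ k` occurs at most once in each gadget. Giving `e` weight `1` and shifting the
potential of each gadget so that `e` starts at `-1 = b`, one may replace the signature of `e` by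
`(b,0)`, which is enabled at `b` only; any state separated from the source of `e` then disables it.

The event `k` gets the signature `(0,1)`, which adds `1` and is disabled at `b = -1` only. This
requires that no edge labelled `k` start at `-1`. As `k^b` leads from `0` to `-1`, the word between
the two blocks `k^b` of `T_i` must have total weight `1`: either `z` has weight `1` and the `X_j`
have weight `0`, or `z` has weight `0` and the `X_j` of weight `1` form a one-in-three model. The
first choice disables `k` wherever it has to be disabled outside `H₃`, the second does so in `H₃`.
-/

/-! ### Regions from potentials -/

section Potential

variable {S E R : Type}

/-- A potential of `A` for the weight function `c`: an edge labelled `e` raises it by `c e`.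
For `R = ZMod (b + 1)` these are the regions of `A` that use group events only. -/
def IsPotential [Add R] (A : TS S E) (c : E → R) (p : S → R) : Prop :=
  ∀ ⦃s e s'⦄, A.delta s e = some s' → p s' = p s + c e

lemma IsPotential.const_add [AddSemigroup R] {A : TS S E} {c : E → R} {p : S → R}
    (hp : IsPotential A c p) (o : R) : IsPotential A c (fun s => o + p s) :=
  fun s e s' h => by simp only [hp h, add_assoc]

lemma IsPotential.add_const_mul [NonUnitalNonAssocSemiring R] {A : TS S E} {c d : E → R}
    {p q : S → R} (hp : IsPotential A c p) (hq : IsPotential A d q) (r : R) :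
    IsPotential A (fun e => c e + r * d e) (fun s => p s + r * q s) :=
  fun s e s' h => by simp only [hp h, hq h, mul_add, add_add_add_comm]

/-- The event `e` labels at most one edge of the (deterministic) transition system `A`. -/
def OccursAtMostOnce (A : TS S E) (e : E) : Prop :=
  ∀ ⦃s s' t t'⦄, A.delta s e = some s' → A.delta t e = some t' → s = t

variable {ι : Type} {S : ι → Type} {A : ∀ i, TS (S i) E}

/-- Any two distinct states of the same constituent of the union are told apart by a family of
`R`-valued potentials for a common weight function. -/
def SeparatedByPotentials (R : Type) [Add R] (A : ∀ i, TS (S i) E) : Prop :=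
  ∀ i (s t : S i), s ≠ t → ∃ (c : E → R) (p : ∀ j, S j → R),
    (∀ j, IsPotential (A j) c (p j)) ∧ p i s ≠ p i t

-- On the affine space `c e = 1`, the linear form `p s - p t` vanishes only if it is zero.
lemma exists_potential_eq_one_and_ne [CommRing R] {c d : E → R} {p q : ∀ i, S i → R}
    {i : ι} {s t : S i} {e : E}
    (hp : ∀ j, IsPotential (A j) c (p j)) (hst : p i s ≠ p i t)
    (hq : ∀ j, IsPotential (A j) d (q j)) (hd : d e = 1) :
    ∃ (c' : E → R) (p' : ∀ j, S j → R),
      (∀ j, IsPotential (A j) c' (p' j)) ∧ c' e = 1 ∧ p' i s ≠ p' i t := by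
  by_cases hqst : q i s = q i t
  · refine ⟨_, _, fun j => (hp j).add_const_mul (hq j) (1 - c e), ?_, ?_⟩
    · simp only [hd]
      ring
    · simpa only [hqst, ne_eq, add_left_inj] using hst
  · exact ⟨d, q, hq, hd, hqst⟩

end Potential

section ModularArithmetic

variable {b : ℕ}

lemma zmod_natCast_eq_neg_one : (b : ZMod (b + 1)) = -1 :=
  eq_neg_of_add_eq_zero_left (ZMod.natCast_self' b)

lemma zmod_natCast_inj_of_le {q r : ℕ} (hq : q ≤ b) (hr : r ≤ b) :
    (q : ZMod (b + 1)) = r ↔ q = r :=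
  ⟨fun h => CharP.natCast_injOn_Iio (ZMod (b + 1)) (b + 1) (Nat.lt_succ_of_le hq)
    (Nat.lt_succ_of_le hr) h, congrArg _⟩

lemma zmod_natCast_ne_neg_one {q : ℕ} (hq : q < b) : (q : ZMod (b + 1)) ≠ -1 := by
  rw [← zmod_natCast_eq_neg_one, Ne, zmod_natCast_inj_of_le hq.le le_rfl]
  exact hq.ne

lemma zmod_one_ne_zero_of_pos (hb : 0 < b) : (1 : ZMod (b + 1)) ≠ 0 := by
  have : Fact (1 < b + 1) := ⟨by omega⟩
  exact one_ne_zero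

lemma zmod_val_le (x : ZMod (b + 1)) : x.val ≤ b :=
  Nat.le_of_lt_succ x.val_lt

lemma zmod_val_lt_of_ne_neg_one {x : ZMod (b + 1)} (hx : x ≠ -1) : x.val < b := by
  refine (zmod_val_le x).lt_of_ne fun h => hx (ZMod.val_injective _ ?_)
  rw [h, ZMod.val_neg_one]

lemma zmod_val_add_one_of_ne_neg_one (hb : 0 < b) {x : ZMod (b + 1)} (hx : x ≠ -1) :
    (x + 1).val = x.val + 1 := by
  have : Fact (1 < b + 1) := ⟨by omega⟩
  have hlt := zmod_val_lt_of_ne_neg_one hx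
  rw [ZMod.val_add_of_lt (by rw [ZMod.val_one]; omega), ZMod.val_one]

end ModularArithmetic

/-- A type of nets that has the states and the transition function of `τ_ZPT^b` and at least the
group events and the two pair events `(0,1)` and `(b,0)`; this covers `τ_ZPT^b` and `τ_ZPPT^b`
together. -/
structure IsZPTLike (b : ℕ) (τ : NetType) : Prop where
  states_eq : τ.states = {s | s ≤ b}
  delta_eq : τ.delta = deltaZPT b
  num_mem : ∀ z ≤ b, BEvent.num z ∈ τ.events
  pair_zero_one_mem : BEvent.pair 0 1 ∈ τ.events
  pair_b_zero_mem : BEvent.pair b 0 ∈ τ.events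

lemma isZPTLike_tauZPT {b : ℕ} (hb : 0 < b) : IsZPTLike b (tauZPT b) where
  states_eq := rfl
  delta_eq := rfl
  num_mem z hz := Or.inr ⟨z, rfl, hz⟩
  pair_zero_one_mem := Or.inl ⟨0, 1, rfl, by omega⟩
  pair_b_zero_mem := Or.inl ⟨b, 0, rfl, by omega⟩

lemma isZPTLike_tauZPPT {b : ℕ} (hb : 0 < b) : IsZPTLike b (tauZPPT b) where
  states_eq := rfl
  delta_eq := rfl
  num_mem z hz := Or.inr ⟨z, rfl, hz⟩
  pair_zero_one_mem := Or.inl ⟨0, 1, rfl, by omega⟩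
  pair_b_zero_mem := Or.inl ⟨b, 0, rfl, by omega⟩

section Region

variable {ι E : Type} {S : ι → Type} {A : ∀ i, TS (S i) E} {b : ℕ} {τ : NetType}
  {c : E → ZMod (b + 1)} {p : ∀ i, S i → ZMod (b + 1)}

lemma unionRegion_of_isPotential (hτ : IsZPTLike b τ) (hp : ∀ i, IsPotential (A i) c (p i)) :
    UnionRegion τ A (fun s => (p s.1 s.2).val) (fun e => .num (c e).val) := by
  refine ⟨fun s => ?_, fun e => hτ.num_mem _ (zmod_val_le _), fun i s e s' h => ?_⟩
  · rw [hτ.states_eq]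
    exact zmod_val_le _
  · simp only [hτ.delta_eq, deltaZPT, hp i h, ZMod.val_add]

lemma UnionRegion.update [DecidableEq E] {sup : (Σ i, S i) → ℕ} {sig : E → BEvent}
    (hreg : UnionRegion τ A sup sig) {e : E} {x : BEvent} (hx : x ∈ τ.events)
    (hedge : ∀ i s s', (A i).delta s e = some s' →
      τ.delta (sup ⟨i, s⟩) x = some (sup ⟨i, s'⟩)) :
    UnionRegion τ A sup (Function.update sig e x) := by
  obtain ⟨hsup, hsig, hdelta⟩ := hreg
  refine ⟨hsup, fun f => ?_, fun i s f s' h => ?_⟩ <;> obtain rfl | hf := eq_or_ne f e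
  · rwa [Function.update_self]
  · rw [Function.update_of_ne hf]
    exact hsig f
  · rw [Function.update_self]
    exact hedge i s s' h
  · rw [Function.update_of_ne hf]
    exact hdelta i s f s' h

-- The signature `(0,1)` of `e` agrees with adding `1` except at the value `b = -1`.
lemma exists_region_delta_eq_none_of_eq_neg_one (hb : 0 < b) (hτ : IsZPTLike b τ)
    (hp : ∀ i, IsPotential (A i) c (p i)) {e : E} (he : c e = 1)
    (hne : ∀ i s s', (A i).delta s e = some s' → p i s ≠ -1) {i : ι} {s : S i}
    (hs : p i s = -1) :
    ∃ sup sig, UnionRegion τ A sup sig ∧ τ.delta (sup ⟨i, s⟩) (sig e) = none := by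
  classical
  refine ⟨_, _, (unionRegion_of_isPotential hτ hp).update hτ.pair_zero_one_mem
    (e := e) fun j t t' h => ?_, ?_⟩
  · have hlt := zmod_val_lt_of_ne_neg_one (hne j t t' h)
    simp only [hτ.delta_eq, deltaZPT, hp j h, he,
      zmod_val_add_one_of_ne_neg_one hb (hne j t t' h), tsub_zero]
    exact if_pos ⟨Nat.zero_le _, hlt⟩
  · rw [Function.update_self, hτ.delta_eq]
    simp [deltaZPT, hs, ZMod.val_neg_one]

-- The signature `(b,0)` of `e` agrees with adding `1` at the value `b = -1` and nowhere else.
lemma exists_region_delta_eq_none_of_ne_neg_one (hτ : IsZPTLike b τ)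
    (hp : ∀ i, IsPotential (A i) c (p i)) {e : E} (he : c e = 1)
    (heq : ∀ i s s', (A i).delta s e = some s' → p i s = -1) {i : ι} {s : S i}
    (hs : p i s ≠ -1) :
    ∃ sup sig, UnionRegion τ A sup sig ∧ τ.delta (sup ⟨i, s⟩) (sig e) = none := by
  classical
  refine ⟨_, _, (unionRegion_of_isPotential hτ hp).update hτ.pair_b_zero_mem
    (e := e) fun j t t' h => ?_, ?_⟩
  · simp [hτ.delta_eq, deltaZPT, hp j h, he, heq j t t' h, ZMod.val_neg_one]
  · rw [Function.update_self, hτ.delta_eq]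
    exact if_neg fun h => (zmod_val_lt_of_ne_neg_one hs).not_ge h.1

lemma exists_region_delta_eq_none_of_source_value (hτ : IsZPTLike b τ)
    (hp : ∀ i, IsPotential (A i) c (p i)) {e : E} (he : c e = 1) (v : ι → ZMod (b + 1))
    (hv : ∀ i s s', (A i).delta s e = some s' → p i s = v i) {i : ι} {s : S i}
    (hs : p i s ≠ v i) :
    ∃ sup sig, UnionRegion τ A sup sig ∧ τ.delta (sup ⟨i, s⟩) (sig e) = none := by
  refine exists_region_delta_eq_none_of_ne_neg_one hτ
    (fun j => (hp j).const_add (-1 - v j)) he (fun j t t' h => ?_) fun h => hs ?_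
  · rw [hv j t t' h, sub_add_cancel]
  · linear_combination h

lemma exists_region_delta_eq_none_of_occursAtMostOnce (hb : 0 < b) (hτ : IsZPTLike b τ)
    (hsep : SeparatedByPotentials (ZMod (b + 1)) A)
    {e : E} (honce : ∀ j, OccursAtMostOnce (A j) e)
    (hp : ∀ j, IsPotential (A j) c (p j)) (he : c e = 1)
    {i : ι} {s : S i} (hs : (A i).delta s e = none) :
    ∃ sup sig, UnionRegion τ A sup sig ∧ τ.delta (sup ⟨i, s⟩) (sig e) = none := by
  classical
  have source_value (q : ∀ j, S j → ZMod (b + 1)) (j : ι) :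
      ∃ x, ∀ t t', (A j).delta t e = some t' → q j t = x := by
    by_cases h : ∃ t t', (A j).delta t e = some t'
    · obtain ⟨t, t', ht⟩ := h
      exact ⟨q j t, fun r r' hr => congrArg _ (honce j hr ht)⟩
    · exact ⟨0, fun t t' ht => (h ⟨t, t', ht⟩).elim⟩
  by_cases hi : ∃ t t', (A i).delta t e = some t'
  · obtain ⟨t, t', ht⟩ := hi
    have hst : s ≠ t := by
      rintro rfl
      simp [hs] at ht
    obtain ⟨d, q, hq, hqst⟩ := hsep i s t hst
    obtain ⟨c', p', hp', he', hst'⟩ := exists_potential_eq_one_and_ne hq hqst hp he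
    choose v hv using source_value p'
    exact exists_region_delta_eq_none_of_source_value hτ hp' he' v hv (hv i t t' ht ▸ hst')
  · choose v hv using source_value p
    refine exists_region_delta_eq_none_of_source_value hτ hp he
      (Function.update v i (p i s + 1)) (fun j t t' ht => ?_) ?_
    · obtain rfl | hj := eq_or_ne j i
      · exact (hi ⟨t, t', ht⟩).elim
      · rw [Function.update_of_ne hj]
        exact hv j t t' ht
    · simpa using zmod_one_ne_zero_of_pos hb

lemma SeparatedByPotentials.unionHasSSP
    (hsep : SeparatedByPotentials (ZMod (b + 1)) A) (hτ : IsZPTLike b τ) :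
    UnionHasSSP τ A := by
  intro i s t hst
  obtain ⟨c, p, hp, hne⟩ := hsep i s t hst
  exact ⟨_, _, unionRegion_of_isPotential hτ hp, fun h => hne (ZMod.val_injective _ h)⟩

end Region

/-! ### The diamond-shaped gadgets -/

section Diamond

variable {b : ℕ} {E R : Type} {k a y : E}

/-- The edges of a diamond: the two paths `k^b` (through `Sum.inl`) and `a k^(b-1) y`
(through `Sum.inr`) between the same two states. -/
inductive DiamondStep (b : ℕ) (k a y : E) :
    Fin (b + 1) ⊕ Fin b → E → Fin (b + 1) ⊕ Fin b → Prop
  | upper (i : Fin b) : DiamondStep b k a y (.inl i.castSucc) k (.inl i.succ)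
  | enter (i : Fin b) (hi : (i : ℕ) = 0) : DiamondStep b k a y (.inl 0) a (.inr i)
  | lower (i : Fin b) (hi : (i : ℕ) + 1 < b) : DiamondStep b k a y (.inr i) k (.inr ⟨i + 1, hi⟩)
  | leave (i : Fin b) (hi : (i : ℕ) + 1 = b) : DiamondStep b k a y (.inr i) y (.inl (Fin.last b))

/-- A diamond: a transition system whose edges are those described by `DiamondStep`. -/
def IsDiamond (A : TS (Fin (b + 1) ⊕ Fin b) E) (k a y : E) : Prop :=
  ∀ s e s', A.delta s e = some s' ↔ DiamondStep b k a y s e s'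

/-- The potential of a diamond that starts at `0`, where `κ` is the weight of `k` and `α` that
of `a`. -/
def diamondPot [AddMonoid R] (κ α : R) : Fin (b + 1) ⊕ Fin b → R
  | .inl q => (q : ℕ) • κ
  | .inr q => α + (q : ℕ) • κ

variable {A : TS (Fin (b + 1) ⊕ Fin b) E}

lemma IsDiamond.isPotential [AddCommMonoid R] (hA : IsDiamond A k a y) {c : E → R}
    (hc : c a + c y = c k) : IsPotential A c (diamondPot (c k) (c a)) := by
  intro s e s' h
  cases (hA s e s').mp h with
  | upper i => simp [diamondPot, succ_nsmul]
  | enter i hi => simp [diamondPot, hi]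
  | lower i hi => simp [diamondPot, succ_nsmul, add_assoc]
  | leave i hi =>
    have hb : b • c k = (i : ℕ) • c k + c k := by rw [← succ_nsmul, hi]
    simp only [diamondPot, Fin.val_last]
    rw [hb]
    nth_rw 2 [← hc]
    abel

lemma IsDiamond.occursAtMostOnce (hA : IsDiamond A k a y) (hay : a ≠ y) {e : E} (he : e ≠ k) :
    OccursAtMostOnce A e := by
  intro s s' t t' hs ht
  cases (hA s e s').mp hs <;> cases (hA t _ t').mp ht <;>
    first | rfl | contradiction | exact congrArg Sum.inr (Fin.ext (by omega))

lemma IsDiamond.diamondPot_ne_neg_one (hA : IsDiamond A k a y) (hak : a ≠ k) (hyk : y ≠ k)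
    {α : ZMod (b + 1)} (hα : α = 0 ∨ α = 1) {s s'} (h : A.delta s k = some s') :
    diamondPot 1 α s ≠ -1 := by
  cases (hA s k s').mp h with
  | upper i => simpa [diamondPot] using zmod_natCast_ne_neg_one i.isLt
  | enter => contradiction
  | lower i hi =>
    obtain rfl | rfl := hα
    · simpa [diamondPot] using zmod_natCast_ne_neg_one i.isLt
    · simpa [diamondPot, add_comm] using zmod_natCast_ne_neg_one hi
  | leave => contradiction

lemma IsDiamond.diamondPot_eq_neg_one (hA : IsDiamond A k a y) {s}
    (h : A.delta s k = none) : diamondPot (1 : ZMod (b + 1)) 1 s = -1 := by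
  have no_step (s') : ¬ DiamondStep b k a y s k s' := fun hs => by simp [(hA _ _ _).mpr hs] at h
  rcases s with q | q
  · obtain ⟨i, rfl⟩ | rfl := q.eq_castSucc_or_eq_last
    · exact (no_step _ (.upper i)).elim
    · simp [diamondPot, zmod_natCast_eq_neg_one]
  · have hq : (q : ℕ) + 1 = b :=
      le_antisymm q.isLt (not_lt.mp fun hq => no_step _ (.lower q hq))
    have hcast : (q : ZMod (b + 1)) + 1 = b := by exact_mod_cast congrArg _ hq
    simpa [diamondPot, add_comm, zmod_natCast_eq_neg_one] using hcast

lemma diamondPot_ne_or_ne (α : ZMod (b + 1)) {s t : Fin (b + 1) ⊕ Fin b} (hst : s ≠ t) :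
    diamondPot 1 α s ≠ diamondPot 1 α t ∨
      diamondPot (0 : ZMod (b + 1)) (-1) s ≠ diamondPot 0 (-1) t := by
  rcases s with p | p <;> rcases t with q | q
  · left
    simpa [diamondPot, zmod_natCast_inj_of_le p.is_le q.is_le, Fin.val_inj] using hst
  · right
    simpa [diamondPot] using zmod_one_ne_zero_of_pos q.pos
  · right
    simpa [diamondPot] using zmod_one_ne_zero_of_pos p.pos
  · left
    simpa [diamondPot, zmod_natCast_inj_of_le p.isLt.le q.isLt.le, Fin.val_inj] using hst

end Diamond

/-! ### The linear gadgets -/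

section Linear

variable {E R : Type}

lemma linTS_delta_eq_some {N : ℕ} {ev : ℕ → E} {s s' : Fin (N + 1)} {e : E} :
    (linTS N ev).delta s e = some s' ↔ (s : ℕ) < N ∧ ev s = e ∧ (s' : ℕ) = s + 1 := by
  simp only [linTS]
  split_ifs with h
  · simp [h, Fin.ext_iff, eq_comm]
  · simpa using fun h₁ h₂ => (h ⟨h₁, h₂⟩).elim

lemma linTS_delta_eq_none {N : ℕ} {ev : ℕ → E} {s : Fin (N + 1)} {e : E} :
    (linTS N ev).delta s e = none ↔ ((s : ℕ) < N → ev s ≠ e) := by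
  simp [linTS]

/-- The total weight of the first `q` labels of a word; it is the potential of a linear
transition system that starts at `0`. -/
def prefixWeight [AddCommMonoid R] (c : E → R) (ev : ℕ → E) (q : ℕ) : R :=
  ∑ i ∈ Finset.range q, c (ev i)

lemma linTS_isPotential [AddCommMonoid R] (N : ℕ) {ev : ℕ → E} {c d : E → R}
    (hcd : ∀ q, c (ev q) = d (ev q)) :
    IsPotential (linTS N ev) c (fun s => prefixWeight d ev s) := by
  intro s e s' h
  obtain ⟨-, rfl, hs'⟩ := linTS_delta_eq_some.mp h
  simp only [prefixWeight, hs', Finset.sum_range_succ, hcd]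

/-- The label sequence `k^n · word · k^∞`, whose finite prefixes label the gadgets `G_j` and
`T_i`. -/
def padded (k : E) (n : ℕ) (word : List E) (q : ℕ) : E :=
  if q < n then k else word.getD (q - n) k

variable {k : E} {n : ℕ} {word : List E}

lemma padded_of_lt {q : ℕ} (hq : q < n) : padded k n word q = k :=
  if_pos hq

lemma padded_add (r : ℕ) : padded k n word (n + r) = word.getD r k := by
  simp [padded]

lemma getD_replicate_append_append_replicate (n' q : ℕ) :
    (List.replicate n k ++ word ++ List.replicate n' k).getD q k = padded k n word q := by
  obtain hq | ⟨r, rfl⟩ := (lt_or_ge q n).imp_right Nat.exists_eq_add_of_le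
  · simp [padded_of_lt hq, hq, List.getElem?_append]
  · rw [padded_add, List.append_assoc, List.getD_append_right _ _ _ _ (by simp),
      List.length_replicate, Nat.add_sub_cancel_left]
    obtain hr | hr := lt_or_ge r word.length
    · exact List.getD_append _ _ _ _ hr
    · rw [List.getD_append_right _ _ _ _ hr, List.getD_eq_default _ _ hr,
        List.getD_eq_getElem?_getD, List.getElem?_getD_replicate_default_eq]

lemma exists_eq_add_of_padded_ne {q : ℕ} (hq : padded k n word q ≠ k) :
    ∃ (r : ℕ) (hr : r < word.length), q = n + r ∧ padded k n word q = word[r] := by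
  obtain hqn | ⟨r, rfl⟩ := (lt_or_ge q n).imp_right Nat.exists_eq_add_of_le
  · exact (hq (padded_of_lt hqn)).elim
  · rw [padded_add] at hq ⊢
    have hr : r < word.length := by
      by_contra hr
      exact hq (List.getD_eq_default _ _ (not_lt.mp hr))
    exact ⟨r, hr, rfl, List.getD_eq_getElem _ _ hr⟩

lemma padded_eq_or_mem (q : ℕ) : padded k n word q = k ∨ padded k n word q ∈ word := by
  refine or_iff_not_imp_left.mpr fun hq => ?_
  obtain ⟨r, hr, -, hqr⟩ := exists_eq_add_of_padded_ne hq
  exact hqr ▸ List.getElem_mem hr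

lemma padded_ne (hk : k ∉ word) {r : ℕ} (hr : r < word.length) : padded k n word (n + r) ≠ k := by
  rw [padded_add, List.getD_eq_getElem _ _ hr]
  exact fun h => hk (h ▸ List.getElem_mem hr)

lemma eq_of_padded_eq (hword : word.Nodup) {q q' : ℕ} (hq : padded k n word q ≠ k)
    (h : padded k n word q' = padded k n word q) : q' = q := by
  obtain ⟨r, hr, rfl, hqr⟩ := exists_eq_add_of_padded_ne hq
  obtain ⟨r', hr', rfl, hqr'⟩ := exists_eq_add_of_padded_ne (h ▸ hq)
  rw [hqr, hqr'] at h
  rw [(hword.getElem_inj_iff).mp h]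

lemma linTS_padded_occursAtMostOnce (N : ℕ) (hword : word.Nodup) {e : E} (he : e ≠ k) :
    OccursAtMostOnce (linTS N (padded k n word)) e := by
  intro s s' t t' hs ht
  obtain ⟨-, rfl, -⟩ := linTS_delta_eq_some.mp hs
  obtain ⟨-, ht, -⟩ := linTS_delta_eq_some.mp ht
  exact Fin.ext (eq_of_padded_eq hword he ht).symm

section PrefixWeight

variable [AddCommMonoid R] (c : E → R)

lemma prefixWeight_padded_of_le {q : ℕ} (hq : q ≤ n) :
    prefixWeight c (padded k n word) q = q • c k := by
  rw [prefixWeight, Finset.sum_congr rfl fun i hi => by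
    rw [padded_of_lt ((Finset.mem_range.mp hi).trans_le hq)], Finset.sum_const, Finset.card_range]

lemma prefixWeight_padded_add (r : ℕ) :
    prefixWeight c (padded k n word) (n + r) =
      n • c k + ∑ i ∈ Finset.range r, c (word.getD i k) := by
  rw [prefixWeight, Finset.sum_range_add, ← prefixWeight, prefixWeight_padded_of_le c le_rfl]
  simp only [padded_add]

lemma prefixWeight_padded_length_add (r : ℕ) :
    prefixWeight c (padded k n word) (n + word.length + r) =
      n • c k + ∑ i ∈ Finset.range word.length, c (word.getD i k) + r • c k := by
  rw [add_assoc, prefixWeight_padded_add, Finset.sum_range_add, add_assoc]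
  simp

end PrefixWeight

lemma eq_add_or_eq_last_of_linTS_padded_delta_eq_none {N : ℕ} {s : Fin (N + 1)}
    (h : (linTS N (padded k n word)).delta s k = none) :
    (∃ r < word.length, (s : ℕ) = n + r) ∨ (s : ℕ) = N := by
  refine or_iff_not_imp_right.mpr fun hs => ?_
  have hsk := linTS_delta_eq_none.mp h ((Nat.le_of_lt_succ s.isLt).lt_of_ne hs)
  obtain ⟨r, hr, hsr, -⟩ := exists_eq_add_of_padded_ne hsk
  exact ⟨r, hr, hsr⟩

lemma linTS_prefixWeight_ne_neg_one {b N : ℕ} {c : E → ZMod (b + 1)} (hk : k ∉ word)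
    (hck : c k = 1) (hN : N ≤ b + word.length + b)
    (hsum : b + word.length < N → ∑ i ∈ Finset.range word.length, c (word.getD i k) = 1)
    {s s'} (h : (linTS N (padded k b word)).delta s k = some s') :
    prefixWeight c (padded k b word) s ≠ -1 := by
  obtain ⟨hs, hsk, -⟩ := linTS_delta_eq_some.mp h
  obtain hsb | ⟨r, hr⟩ := (lt_or_ge (s : ℕ) b).imp_right Nat.exists_eq_add_of_le
  · simpa [prefixWeight_padded_of_le c hsb.le, hck] using zmod_natCast_ne_neg_one hsb
  · rw [hr] at hs hsk ⊢
    have hlen : word.length ≤ r := not_lt.mp fun hr => padded_ne hk hr hsk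
    obtain ⟨t, rfl⟩ := Nat.exists_eq_add_of_le hlen
    rw [← add_assoc, prefixWeight_padded_length_add, hsum (by omega), hck]
    simpa [zmod_natCast_eq_neg_one] using zmod_natCast_ne_neg_one (b := b) (q := t) (by omega)

lemma prefixWeight_padded_add_eq_neg_one {b r : ℕ} {c : E → ZMod (b + 1)} (hck : c k = 1)
    (hzero : ∀ i < r, c (word.getD i k) = 0) :
    prefixWeight c (padded k b word) (b + r) = -1 := by
  rw [prefixWeight_padded_add, Finset.sum_eq_zero fun i hi => hzero i (Finset.mem_range.mp hi),
    hck, nsmul_one, add_zero, zmod_natCast_eq_neg_one]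

lemma prefixWeight_padded_length_add_eq_neg_one {b : ℕ} {c : E → ZMod (b + 1)} (hck : c k = 1)
    (hsum : ∑ i ∈ Finset.range word.length, c (word.getD i k) = 1) :
    prefixWeight c (padded k b word) (b + word.length + b) = -1 := by
  rw [prefixWeight_padded_length_add, hsum, hck]
  simp [zmod_natCast_eq_neg_one]

lemma linTS_prefixWeight_eq_neg_one {b N : ℕ} {c : E → ZMod (b + 1)} (hck : c k = 1)
    (hzero : ∀ i, i + 1 < word.length → c (word.getD i k) = 0)
    (hlast : prefixWeight c (padded k b word) N = -1) {s : Fin (N + 1)}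
    (h : (linTS N (padded k b word)).delta s k = none) :
    prefixWeight c (padded k b word) s = -1 := by
  obtain ⟨r, hr, hs⟩ | hs := eq_add_or_eq_last_of_linTS_padded_delta_eq_none h
  · rw [hs]
    exact prefixWeight_padded_add_eq_neg_one hck fun i hi => hzero i (by omega)
  · rwa [hs]

lemma sub_le_of_padded_eq_on_Ico {q q' : ℕ} (hk : k ∉ word) (hne : word ≠ []) (hqq' : q < q')
    (hq' : q' ≤ n + word.length + n) (hrun : ∀ i ∈ Finset.Ico q q', padded k n word i = k) :
    q' - q ≤ n := by
  have word_disjoint (r : ℕ) (hr : r < word.length) : n + r ∉ Finset.Ico q q' :=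
    fun h => padded_ne hk hr (hrun _ h)
  have hfirst := word_disjoint 0 (List.length_pos_iff.mpr hne)
  have hstart := word_disjoint (q - n)
  simp only [Finset.mem_Ico] at hfirst hstart
  omega

-- Either some letter of the word lies between the two positions and is counted by exactly one
-- of them, or the positions belong to the same run of `k`s, which has length at most `b`.
lemma exists_prefixWeight_single_ne [DecidableEq E] {b q q' : ℕ} (hb : 0 < b)
    (hword : word.Nodup) (hk : k ∉ word) (hne : word ≠ []) (hqq' : q < q')
    (hq' : q' ≤ b + word.length + b) :
    ∃ e, prefixWeight (Pi.single e (1 : ZMod (b + 1))) (padded k b word) q ≠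
      prefixWeight (Pi.single e 1) (padded k b word) q' := by
  suffices ∃ e, ∑ i ∈ Finset.Ico q q',
      Pi.single (M := fun _ => ZMod (b + 1)) e 1 (padded k b word i) ≠ 0 by
    obtain ⟨e, he⟩ := this
    rw [Finset.sum_Ico_eq_sub _ hqq'.le] at he
    exact ⟨e, (sub_ne_zero.mp he).symm⟩
  by_cases hletter : ∃ r ∈ Finset.Ico q q', padded k b word r ≠ k
  · obtain ⟨r, hr, hrk⟩ := hletter
    refine ⟨padded k b word r, ?_⟩
    rw [Finset.sum_eq_single_of_mem r hr fun i _ hir =>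
      Pi.single_eq_of_ne (fun h => hir (eq_of_padded_eq hword hrk h)) _, Pi.single_eq_same]
    exact zmod_one_ne_zero_of_pos hb
  · push Not at hletter
    refine ⟨k, ?_⟩
    rw [Finset.sum_congr rfl fun i hi => by rw [hletter i hi, Pi.single_eq_same]]
    have hrun : q' - q ≤ b := sub_le_of_padded_eq_on_Ico hk hne hqq' hq' hletter
    simpa [zmod_natCast_inj_of_le hrun (Nat.zero_le _)] using
      (zmod_natCast_inj_of_le hrun (Nat.zero_le b)).not.mpr (by omega)

lemma exists_prefixWeight_single_ne_of_ne [DecidableEq E] {b N : ℕ} (hb : 0 < b)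
    (hword : word.Nodup) (hk : k ∉ word) (hne : word ≠ []) (hN : N ≤ b + word.length + b)
    {s t : Fin (N + 1)} (hst : s ≠ t) :
    ∃ e, prefixWeight (Pi.single e (1 : ZMod (b + 1))) (padded k b word) s ≠
      prefixWeight (Pi.single e 1) (padded k b word) t := by
  wlog hlt : s < t generalizing s t
  · obtain ⟨e, he⟩ := this hst.symm (hst.symm.lt_of_le (not_lt.mp hlt))
    exact ⟨e, he.symm⟩
  · exact exists_prefixWeight_single_ne hb hword hk hne hlt ((Nat.le_of_lt_succ t.isLt).trans hN)

end Linear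

/-! ### The union `U_Z(φ)` -/

section UnionUZ

variable {R : Type} {b m : ℕ}

lemma isDiamond_H3 : IsDiamond (H3 b m) .k .u .zz := by
  intro s e s'
  constructor
  · intro h
    rcases s with i | i <;> cases e <;> simp only [H3, reduceCtorEq] at h <;>
      split_ifs at h with hi <;> obtain rfl := Option.some.inj h
    · exact .upper ⟨i, hi⟩
    · obtain rfl : i = 0 := Fin.ext hi.1
      exact .enter ⟨0, hi.2⟩ rfl
    · exact .lower i hi
    · exact .leave i (by omega)
  · rintro (i | ⟨⟨_, hi⟩, rfl⟩ | ⟨i, hi⟩ | ⟨i, hi⟩)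
    · exact dif_pos i.isLt
    · exact dif_pos ⟨rfl, hi⟩
    · exact dif_pos hi
    · exact if_pos (Nat.eq_sub_of_add_eq hi)

lemma isDiamond_Fgad (j : Fin m) : IsDiamond (Fgad b j) .k (.v j) (.X j) := by
  intro s e s'
  constructor
  · intro h
    rcases s with i | i <;> cases e <;> simp only [Fgad, reduceCtorEq] at h <;>
      split_ifs at h with hi <;> obtain rfl := Option.some.inj h
    · exact .upper ⟨i, hi⟩
    · obtain rfl : i = 0 := Fin.ext hi.1
      obtain rfl := hi.2.2
      exact .enter ⟨0, hi.2.1⟩ rfl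
    · exact .lower i hi
    · obtain rfl := hi.2
      exact .leave i (by omega)
  · rintro (i | ⟨⟨_, hi⟩, rfl⟩ | ⟨i, hi⟩ | ⟨i, hi⟩)
    · exact dif_pos i.isLt
    · exact dif_pos ⟨rfl, hi, rfl⟩
    · exact dif_pos hi
    · exact if_pos ⟨Nat.eq_sub_of_add_eq hi, rfl⟩

/-- The part of the label sequence of the gadget `T_i` between the two blocks `k^b`. -/
def clauseWord (φ : CMSat m) (i : Fin m) : List (ZEv m) :=
  [.X (φ.cl i 0), .X (φ.cl i 1), .X (φ.cl i 2), .zz]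

lemma clauseWord_nodup (φ : CMSat m) (i : Fin m) : (clauseWord φ i).Nodup := by
  have h₀₁ := φ.mono01 i
  have h₁₂ := φ.mono12 i
  simp [clauseWord, h₀₁.ne, h₁₂.ne, (h₀₁.trans h₁₂).ne]

lemma linOfList_gadG (j : Fin m) :
    linOfList (gadG b j) .k = linTS (gadG b j).length (padded .k b [.X j]) := by
  refine congrArg _ (funext fun q => ?_)
  simpa [gadG] using getD_replicate_append_append_replicate 0 q

lemma linOfList_gadT (φ : CMSat m) (i : Fin m) :
    linOfList (gadT b φ i) .k = linTS (gadT b φ i).length (padded .k b (clauseWord φ i)) :=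
  congrArg _ (funext fun q => getD_replicate_append_append_replicate b q)

lemma length_gadG (j : Fin m) : (gadG b j).length = b + [ZEv.X j].length := by
  simp only [gadG, List.length_append, List.length_replicate]

lemma length_gadT (φ : CMSat m) (i : Fin m) :
    (gadT b φ i).length = b + (clauseWord φ i).length + b := by
  simp only [gadT, clauseWord, List.length_append, List.length_replicate]

lemma UZ_occursAtMostOnce (φ : CMSat m) {e : ZEv m} (he : e ≠ .k) (i : ZIdx m) :
    OccursAtMostOnce (UZ b φ i) e := by
  cases i with
  | H => exact isDiamond_H3.occursAtMostOnce (by simp) he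
  | F j => exact (isDiamond_Fgad j).occursAtMostOnce (by simp) he
  | G j =>
    simp only [UZ, linOfList_gadG]
    exact linTS_padded_occursAtMostOnce _ (List.nodup_singleton _) he
  | T i =>
    simp only [UZ, linOfList_gadT]
    exact linTS_padded_occursAtMostOnce _ (clauseWord_nodup φ i) he

/-- The weight function that agrees with `w` on `k`, `z` and all `X_j`, and whose values on `u` and
`v_j` make the two paths of `H₃` and of `F_j` equally heavy. -/
def balance [Sub R] (w : ZEv m → R) : ZEv m → R
  | .u => w .k - w .zz
  | .v j => w .k - w (.X j)
  | e => w e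

/-- The potential of `U_Z(φ)` for the weight function `balance w` that vanishes at all initial
states. -/
def pot [AddCommGroup R] (b : ℕ) (φ : CMSat m) (w : ZEv m → R) : ∀ i, ZSt b φ i → R
  | .H => diamondPot (w .k) (balance w .u)
  | .F j => diamondPot (w .k) (balance w (.v j))
  | .G j => fun s : Fin _ => prefixWeight w (padded .k b [.X j]) s
  | .T i => fun s : Fin _ => prefixWeight w (padded .k b (clauseWord φ i)) s

lemma isPotential_pot [AddCommGroup R] (φ : CMSat m) (w : ZEv m → R) (i : ZIdx m) :
    IsPotential (UZ b φ i) (balance w) (pot b φ w i) := by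
  cases i with
  | H => exact isDiamond_H3.isPotential (sub_add_cancel _ _)
  | F j => exact (isDiamond_Fgad j).isPotential (sub_add_cancel _ _)
  | G j =>
    simp only [UZ, linOfList_gadG]
    refine linTS_isPotential _ fun q => ?_
    obtain h | h := padded_eq_or_mem (k := .k) (n := b) (word := [ZEv.X j]) q
    · simp only [h, balance]
    · simp only [List.mem_singleton.mp h, balance]
  | T i =>
    simp only [UZ, linOfList_gadT]
    refine linTS_isPotential _ fun q => ?_
    obtain h | h := padded_eq_or_mem (k := .k) (n := b) (word := clauseWord φ i) q
    · simp only [h, balance]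
    · simp only [clauseWord, List.mem_cons, List.not_mem_nil, or_false] at h
      rcases h with h | h | h | h <;> simp only [clauseWord, h, balance]

lemma exists_balance_eq_one [Ring R] (e : ZEv m) : ∃ w : ZEv m → R, balance w e = 1 := by
  cases e with
  | u | v => exact ⟨Pi.single .k 1, by simp [balance]⟩
  | k | zz | X => exact ⟨Pi.single _ 1, Pi.single_eq_same _ _⟩

lemma exists_pot_ne (hb : 0 < b) (φ : CMSat m) (i : ZIdx m) {s t : ZSt b φ i} (hst : s ≠ t) :
    ∃ w : ZEv m → ZMod (b + 1), pot b φ w i s ≠ pot b φ w i t := by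
  cases i with
  | H =>
    obtain h | h := diamondPot_ne_or_ne 1 hst
    · exact ⟨Pi.single .k 1, by simpa [pot, balance] using h⟩
    · exact ⟨Pi.single .zz 1, by simpa [pot, balance] using h⟩
  | F j =>
    obtain h | h := diamondPot_ne_or_ne 1 hst
    · exact ⟨Pi.single .k 1, by simpa [pot, balance] using h⟩
    · exact ⟨Pi.single (.X j) 1, by simpa [pot, balance] using h⟩
  | G j =>
    obtain ⟨e, he⟩ := exists_prefixWeight_single_ne_of_ne (k := .k) (word := [ZEv.X j]) hb
      (List.nodup_singleton _) (by simp) (by simp) (by simp [length_gadG]) hst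
    exact ⟨_, he⟩
  | T i =>
    obtain ⟨e, he⟩ := exists_prefixWeight_single_ne_of_ne (k := .k) hb (clauseWord_nodup φ i)
      (by simp [clauseWord]) (by simp [clauseWord]) (length_gadT φ i).le hst
    exact ⟨_, he⟩

lemma separatedByPotentials_UZ (hb : 0 < b) (φ : CMSat m) :
    SeparatedByPotentials (ZMod (b + 1)) (UZ b φ) := by
  intro i s t hst
  obtain ⟨w, hw⟩ := exists_pot_ne hb φ i hst
  exact ⟨_, _, isPotential_pot φ w, hw⟩

/-- Conditions on `w` under which, in `U_Z(φ)`, no edge labelled `k` starts at potential `-1`. -/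
structure IsAdmissible [Semiring R] (φ : CMSat m) (w : ZEv m → R) : Prop where
  k_eq : w .k = 1
  zz_eq : w .zz = 0 ∨ w .zz = 1
  X_eq j : w (.X j) = 0 ∨ w (.X j) = 1
  clause_sum i : ∑ j : Fin 3, w (.X (φ.cl i j)) + w .zz = 1

lemma IsAdmissible.clauseWord_sum [Semiring R] {φ : CMSat m} {w : ZEv m → R}
    (hw : IsAdmissible φ w) (i : Fin m) :
    ∑ r ∈ Finset.range (clauseWord φ i).length, w ((clauseWord φ i).getD r .k) = 1 := by
  simpa [clauseWord, Finset.sum_range_succ, Fin.sum_univ_three] using hw.clause_sum i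

lemma IsAdmissible.pot_ne_neg_one {φ : CMSat m} {w : ZEv m → ZMod (b + 1)}
    (hw : IsAdmissible φ w) (i : ZIdx m) {s s' : ZSt b φ i}
    (h : (UZ b φ i).delta s .k = some s') : pot b φ w i s ≠ -1 := by
  have one_sub {x : ZMod (b + 1)} : x = 0 ∨ x = 1 → 1 - x = 0 ∨ 1 - x = 1 := by
    rintro (rfl | rfl) <;> simp
  cases i with
  | H =>
    simp only [pot, balance, hw.k_eq]
    exact isDiamond_H3.diamondPot_ne_neg_one (by simp) (by simp) (one_sub hw.zz_eq) h
  | F j =>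
    simp only [pot, balance, hw.k_eq]
    exact (isDiamond_Fgad j).diamondPot_ne_neg_one (by simp) (by simp) (one_sub (hw.X_eq j)) h
  | G j =>
    simp only [UZ, linOfList_gadG] at h
    exact linTS_prefixWeight_ne_neg_one (by simp) hw.k_eq (by simp [length_gadG])
      (fun hlt => by simp [length_gadG] at hlt) h
  | T i =>
    simp only [UZ, linOfList_gadT] at h
    exact linTS_prefixWeight_ne_neg_one (by simp [clauseWord]) hw.k_eq (length_gadT φ i).le
      (fun _ => hw.clauseWord_sum i) h

/-- The weight function with value `1` on `k`, `ζ` on `z` and `ξ j` on `X_j`; for suitable `ζ` and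
`ξ` it yields the potentials that disable `k`. -/
def kWeight [Zero R] [One R] (ζ : R) (ξ : Fin m → R) : ZEv m → R
  | .k => 1
  | .zz => ζ
  | .X j => ξ j
  | _ => 0

lemma isAdmissible_kWeight_one_zero [Semiring R] (φ : CMSat m) :
    IsAdmissible φ (kWeight (1 : R) 0) := by
  constructor <;> simp [kWeight]

lemma isAdmissible_kWeight_zero_indicator [Semiring R] {φ : CMSat m} {M : Set (Fin m)}
    (hM : OneInThreeModel φ M) : IsAdmissible φ (kWeight (0 : R) (M.indicator 1)) where
  k_eq := rfl
  zz_eq := .inl rfl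
  X_eq j := Set.indicator_eq_zero_or_self M 1 j
  clause_sum i := by
    obtain ⟨j, hj, huniq⟩ := hM i
    simp only [kWeight, add_zero]
    rw [Fintype.sum_eq_single j fun j' hj' => Set.indicator_of_notMem (mt (huniq j') hj') 1,
      Set.indicator_of_mem hj, Pi.one_apply]

lemma pot_kWeight_zero_H_eq_neg_one (φ : CMSat m) (ξ : Fin m → ZMod (b + 1))
    {s : ZSt b φ .H} (h : (UZ b φ .H).delta s .k = none) : pot b φ (kWeight 0 ξ) .H s = -1 := by
  simp only [pot, balance, kWeight, sub_zero]
  exact isDiamond_H3.diamondPot_eq_neg_one h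

lemma pot_kWeight_one_zero_eq_neg_one (φ : CMSat m) {i : ZIdx m} (hi : i ≠ .H) {s : ZSt b φ i}
    (h : (UZ b φ i).delta s .k = none) :
    pot b φ (kWeight (1 : ZMod (b + 1)) 0) i s = -1 := by
  have hw := isAdmissible_kWeight_one_zero (R := ZMod (b + 1)) φ
  cases i with
  | H => contradiction
  | F j =>
    simp only [pot, balance, kWeight, Pi.zero_apply, sub_zero]
    exact (isDiamond_Fgad j).diamondPot_eq_neg_one h
  | G j =>
    simp only [UZ, linOfList_gadG] at h
    refine linTS_prefixWeight_eq_neg_one hw.k_eq (fun i hi => by simp at hi) ?_ h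
    rw [length_gadG]
    exact prefixWeight_padded_add_eq_neg_one hw.k_eq fun i hi => by
      simp [Nat.lt_one_iff.mp hi, kWeight]
  | T i =>
    simp only [UZ, linOfList_gadT] at h
    refine linTS_prefixWeight_eq_neg_one hw.k_eq (fun r hr => ?_) ?_ h
    · have hr₃ : r < 3 := Nat.lt_of_succ_lt_succ hr
      interval_cases r <;> simp [clauseWord, kWeight]
    · rw [length_gadT]
      exact prefixWeight_padded_length_add_eq_neg_one hw.k_eq (hw.clauseWord_sum i)

lemma exists_isAdmissible_pot_eq_neg_one {φ : CMSat m} {M : Set (Fin m)}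
    (hM : OneInThreeModel φ M) {i : ZIdx m} {s : ZSt b φ i}
    (h : (UZ b φ i).delta s .k = none) :
    ∃ w : ZEv m → ZMod (b + 1), IsAdmissible φ w ∧ pot b φ w i s = -1 := by
  by_cases hi : i = .H
  · subst hi
    exact ⟨_, isAdmissible_kWeight_zero_indicator hM, pot_kWeight_zero_H_eq_neg_one φ _ h⟩
  · exact ⟨_, isAdmissible_kWeight_one_zero φ, pot_kWeight_one_zero_eq_neg_one φ hi h⟩

end UnionUZ

theorem stmt13_general {b : ℕ} (hb : 0 < b) {τ : NetType} (hτ : IsZPTLike b τ)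
    {m : ℕ} (φ : CMSat m) {M : Set (Fin m)} (hM : OneInThreeModel φ M) :
    UnionHasESSP τ (UZ b φ) ∧ UnionHasSSP τ (UZ b φ) := by
  have hsep := separatedByPotentials_UZ hb φ
  refine ⟨fun e i s hs => ?_, hsep.unionHasSSP hτ⟩
  obtain rfl | he := eq_or_ne e .k
  · obtain ⟨w, hw, hws⟩ := exists_isAdmissible_pot_eq_neg_one hM hs
    exact exists_region_delta_eq_none_of_eq_neg_one (e := .k) hb hτ (isPotential_pot φ w) hw.k_eq
      (fun j _ _ => hw.pot_ne_neg_one j) hws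
  · obtain ⟨w, hw⟩ := exists_balance_eq_one (R := ZMod (b + 1)) e
    exact exists_region_delta_eq_none_of_occursAtMostOnce hb hτ hsep
      (UZ_occursAtMostOnce φ he) (isPotential_pot φ w) hw hs

/-- Let `b ≥ 2` and `τ ∈ {τ_ZPT^b, τ_ZPPT^b}`.  If the cubic
monotone one-in-three 3-SAT instance `φ` has a one-in-three model, then the union
`U_Z(φ)` has the `τ`-ESSP and the `τ`-SSP. -/
theorem stmt13 (b : ℕ) (hb : 2 ≤ b) (τ : NetType) (hτ : τ = tauZPT b ∨ τ = tauZPPT b)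
    {m : ℕ} (φ : CMSat m) (M : Set (Fin m)) (hM : OneInThreeModel φ M) :
    UnionHasESSP τ (UZ b φ) ∧ UnionHasSSP τ (UZ b φ) := by
  have hb₀ : 0 < b := by omega
  rcases hτ with rfl | rfl
  · exact stmt13_general hb₀ (isZPTLike_tauZPT hb₀) φ hM
  · exact stmt13_general hb₀ (isZPTLike_tauZPPT hb₀) φ hM

end PNS
end

section
/- Let b < b' be positive integers and let A be the TS with states s₀,…,s_{b'}, the single event a, initial state s₀ and transitions δ(sᵢ, a) = s_{i+1} for 0 ≤ i ≤ b'−1 and δ(s_{b'}, a) = s₀ (a directed cycle of length b'+1 in which every edge is labeled a). Then A is τ_RZPT^{b'}-solvable but A is not τ_RZPT^b-solvable (the SSA (s₀, s_{b+1}) is solved by no τ_RZPT^b-region). In particular, the class of τ_RZPT^{b'}-solvable TS is not contained in the class of τ_RZPT^b-solvable TS. -/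
namespace PNS

/-- The directed cycle `s₀ −a→ s₁ −a→ … −a→ s_n −a→ s₀` on `n+1` states with the
single event `a` and initial state `s₀`. -/
def cycleTS (n : ℕ) : TS (Fin (n + 1)) Unit where
  init := ⟨0, Nat.succ_pos n⟩
  delta s _ :=
    some (if h : (s : ℕ) < n then ⟨(s : ℕ) + 1, Nat.succ_lt_succ h⟩ else ⟨0, Nat.succ_pos n⟩)

/-!
Along a path whose edges all carry the event `e`, a number `sig e = z` makes the support grow by
`z` modulo `b + 1` at each step, so it returns to its initial value after `b + 1` steps. A pair
`sig e = (m, n)` of the restricted type forces the support to be `m` before and `n` after each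
edge, so it is constant as soon as the path has two edges (for `b = 0` every support is `0`).
Hence no region separates the ends of a path of `b + 1` equally labeled edges, and in a cycle of
length `b' + 1 > b + 1` these ends are distinct. On the other hand this cycle is `ℤ_{b'+1}` with
`a` acting as addition of `1`, and this identification is itself an injective region.
-/

theorem hasESSP_of_total {τ : NetType} {S E : Type} {A : TS S E}
    (hA : ∀ s e, A.delta s e ≠ none) : HasESSP τ A :=
  fun e s hs => absurd hs (hA s e)

theorem not_solvable_of_forall_sup_eq {τ : NetType} {S E : Type} {A : TS S E} {s s' : S}
    (hne : s ≠ s') (heq : ∀ sup sig, IsRegion τ A sup sig → sup s = sup s') : ¬ Solvable τ A := by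
  rintro ⟨-, hSSP⟩
  obtain ⟨sup, sig, hreg, hsup⟩ := hSSP s s' hne
  exact hsup (heq sup sig hreg)

theorem IsRegion.hasSSP_of_injective {τ : NetType} {S E : Type} {A : TS S E} {sup : S → ℕ}
    {sig : E → BEvent} (h : IsRegion τ A sup sig) (hinj : Function.Injective sup) :
    HasSSP τ A :=
  fun _ _ hne => ⟨sup, sig, h, hinj.ne hne⟩

namespace IsRegion

variable {b : ℕ} {S E : Type} {A : TS S E} {sup : S → ℕ} {sig : E → BEvent} {e : E}

theorem sup_eq_of_sig_eq_pair (h : IsRegion (tauRZPT b) A sup sig) {m n : ℕ}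
    (hsig : sig e = .pair m n) {s s' : S} (hs : A.delta s e = some s') :
    sup s = m ∧ sup s' = n := by
  have hedge := h.edge s e s' hs
  simp only [tauRZPT, deltaRZPT, hsig, Option.ite_none_right_eq_some, Option.some.injEq] at hedge
  exact ⟨hedge.1.1, hedge.2.symm⟩

theorem sup_modEq_of_sig_eq_num (h : IsRegion (tauRZPT b) A sup sig) {z : ℕ}
    (hsig : sig e = .num z) {s s' : S} (hs : A.delta s e = some s') :
    sup s' ≡ sup s + z [MOD b + 1] := by
  have hedge := h.edge s e s' hs
  simp only [tauRZPT, deltaRZPT, hsig, Option.some.injEq] at hedge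
  exact hedge ▸ Nat.mod_modEq _ _

theorem sup_path_modEq_of_sig_eq_num (h : IsRegion (tauRZPT b) A sup sig) {z : ℕ}
    (hsig : sig e = .num z) {p : ℕ → S} {k : ℕ}
    (hp : ∀ i < k, A.delta (p i) e = some (p (i + 1))) :
    sup (p k) ≡ sup (p 0) + k * z [MOD b + 1] := by
  induction k with
  | zero => simp [Nat.ModEq.refl]
  | succ k ih =>
    calc sup (p (k + 1)) ≡ sup (p k) + z [MOD b + 1] :=
          h.sup_modEq_of_sig_eq_num hsig (hp k k.lt_succ_self)
      _ ≡ sup (p 0) + k * z + z [MOD b + 1] :=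
          (ih fun i hi => hp i (hi.trans k.lt_succ_self)).add_right z
      _ = sup (p 0) + (k + 1) * z := by ring

theorem sup_path_eq_of_sig_eq_pair (h : IsRegion (tauRZPT b) A sup sig) {m n : ℕ}
    (hsig : sig e = .pair m n) {p : ℕ → S} {k : ℕ} (hk : 1 < k)
    (hp : ∀ i < k, A.delta (p i) e = some (p (i + 1))) : sup (p k) = sup (p 0) := by
  obtain ⟨k, rfl⟩ := Nat.exists_eq_add_of_lt hk
  obtain ⟨hp0, hp1⟩ := h.sup_eq_of_sig_eq_pair hsig (hp 0 (by omega))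
  have hp1' : sup (p 1) = m := (h.sup_eq_of_sig_eq_pair hsig (hp 1 hk)).1
  have hpk : sup (p (1 + k + 1)) = n := (h.sup_eq_of_sig_eq_pair hsig (hp (1 + k) (by omega))).2
  exact hpk.trans (hp1.symm.trans (hp1'.trans hp0.symm))

theorem sup_path_succ_eq (h : IsRegion (tauRZPT b) A sup sig) {p : ℕ → S}
    (hp : ∀ i < b + 1, A.delta (p i) e = some (p (i + 1))) : sup (p (b + 1)) = sup (p 0) := by
  have hle (s : S) : sup s ≤ b := h.sup_mem s
  cases hsig : sig e with
  | pair m n =>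
    rcases b.eq_zero_or_pos with rfl | hb
    · exact (Nat.le_zero.mp (hle _)).trans (Nat.le_zero.mp (hle _)).symm
    · exact h.sup_path_eq_of_sig_eq_pair hsig (Nat.succ_lt_succ hb) hp
  | num z =>
    have hmod : sup (p (b + 1)) ≡ sup (p 0) [MOD b + 1] := by
      simpa [Nat.ModEq] using h.sup_path_modEq_of_sig_eq_num hsig hp
    exact hmod.eq_of_lt_of_lt (Nat.lt_succ_of_le (hle _)) (Nat.lt_succ_of_le (hle _))

end IsRegion

theorem cycleTS_delta (n : ℕ) (s : Fin (n + 1)) (e : Unit) :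
    (cycleTS n).delta s e = some (s + 1) := by
  refine congrArg some ?_
  split_ifs with hs
  · exact Fin.ext (Fin.val_add_one_of_lt hs).symm
  · have hlast : s = Fin.last n := Fin.ext (le_antisymm s.is_le (not_lt.mp hs))
    rw [hlast, Fin.last_add_one, Fin.mk_zero]

-- The label is `1 : Fin (n + 1)` rather than `1 : ℕ`, since `1` is not an event of `tauRZPT 0`.
theorem isRegion_cycleTS_val (n : ℕ) :
    IsRegion (tauRZPT n) (cycleTS n) Fin.val fun _ => .num (1 : Fin (n + 1)) where
  sup_mem := Fin.is_le
  sig_mem _ := Or.inr ⟨_, rfl, Fin.is_le 1⟩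
  edge s e s' hs := by
    obtain rfl : s + 1 = s' := Option.some.inj ((cycleTS_delta n s e).symm.trans hs)
    exact congrArg some (Fin.val_add s 1).symm

theorem solvable_tauRZPT_cycleTS (n : ℕ) : Solvable (tauRZPT n) (cycleTS n) :=
  ⟨hasESSP_of_total fun s e => by simp [cycleTS_delta],
    (isRegion_cycleTS_val n).hasSSP_of_injective Fin.val_injective⟩

theorem IsRegion.cycleTS_sup_ofNat_succ_eq {b n : ℕ} {sup : Fin (n + 1) → ℕ}
    {sig : Unit → BEvent} (h : IsRegion (tauRZPT b) (cycleTS n) sup sig) :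
    sup (Fin.ofNat (n + 1) (b + 1)) = sup 0 := by
  refine h.sup_path_succ_eq (p := Fin.ofNat (n + 1)) (e := ()) fun i _ => ?_
  rw [cycleTS_delta]
  exact congrArg some (by ext; simp [Fin.val_add])

/-- For positive integers `b < b'`, the `a`-labeled cycle `A` on
the states `s₀,…,s_{b'}` is `τ_RZPT^{b'}`-solvable, but no `τ_RZPT^b`-region of `A`
solves the SSA `(s₀, s_{b+1})`, so `A` is not `τ_RZPT^b`-solvable.  In particular,
the class of `τ_RZPT^{b'}`-solvable TS is not contained in the class of
`τ_RZPT^b`-solvable TS. -/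
theorem stmt14 (b b' : ℕ) (hb : 1 ≤ b) (hbb' : b < b') :
    Solvable (tauRZPT b') (cycleTS b') ∧
    (∀ (sup : Fin (b' + 1) → ℕ) (sig : Unit → BEvent),
      IsRegion (tauRZPT b) (cycleTS b') sup sig →
        sup ⟨0, Nat.succ_pos b'⟩ = sup ⟨b + 1, by omega⟩) ∧
    ¬ Solvable (tauRZPT b) (cycleTS b') := by
  have hsup : ∀ (sup : Fin (b' + 1) → ℕ) (sig : Unit → BEvent),
      IsRegion (tauRZPT b) (cycleTS b') sup sig →
        sup ⟨0, Nat.succ_pos b'⟩ = sup ⟨b + 1, by omega⟩ := by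
    intro sup sig h
    have hofNat : Fin.ofNat (b' + 1) (b + 1) = ⟨b + 1, by omega⟩ :=
      Fin.ext (Nat.mod_eq_of_lt (by omega))
    exact hofNat ▸ h.cycleTS_sup_ofNat_succ_eq.symm
  exact ⟨solvable_tauRZPT_cycleTS b', hsup, not_solvable_of_forall_sup_eq (by simp) hsup⟩

end PNS
end

section
/- Let b ∈ ℕ⁺, τ ∈ {τ_ZPT^b, τ_ZPPT^b, τ_RZPT^b}, let A be a TS with event set E = {e₁,…,e_n}, and let A' be a spanning tree of A with chords t₁,…,t_k. A vector abs ∈ ℤ_{b+1}ⁿ is an abstract signature of A if and only if ψ_{tᵢ}·abs = 0 for all i ∈ {1,…,k}. Consequently, for any two spanning trees A' and A'' of A, a vector abs ∈ ℤ_{b+1}ⁿ satisfies all fundamental-cycle equations of A' if and only if it satisfies all fundamental-cycle equations of A''. -/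
namespace PNS

/-- A spanning tree of `A`, represented by the parent function of the tree,
a depth function witnessing well-foundedness, and the Parikh vectors `count s`
of the unique tree paths from the initial state to the states. -/
structure SpanTree {S E : Type} [DecidableEq E] (A : TS S E) : Type where
  parent : S → Option (S × E)
  depth : S → ℕ
  count : S → E → ℕ
  parent_init : parent A.init = none
  parent_ne : ∀ s, s ≠ A.init → ∃ p e, parent s = some (p, e)
  parent_edge : ∀ s p e, parent s = some (p, e) → A.delta p e = some s
  depth_lt : ∀ s p e, parent s = some (p, e) → depth p < depth s
  count_init : ∀ e, count A.init e = 0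
  count_parent : ∀ s p e0 e, parent s = some (p, e0) →
    count s e = count p e + (if e = e0 then 1 else 0)

/-- `abs` is an abstract signature of `A` (w.r.t. the bound `b`): some support
`sup` turns it into an abstract region, i.e. `sup s' = sup s + abs e (mod b+1)`
for every edge `s −e→ s'`. -/
def AbstractSig (b : ℕ) {S E : Type} (A : TS S E) (abs : E → ZMod (b + 1)) : Prop :=
  ∃ sup : S → ZMod (b + 1), ∀ s e s', A.delta s e = some s' → sup s' = sup s + abs e

/-- `s −e→ s'` is a chord of the spanning tree `T`: an edge of `A` that is not a tree edge. -/
def IsChord {S E : Type} [DecidableEq E] {A : TS S E} (T : SpanTree A)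
    (s : S) (e : E) (s' : S) : Prop :=
  A.delta s e = some s' ∧ T.parent s' ≠ some (s, e)

/-- The fundamental cycle `ψ_t` of the chord `t = s −e→ s'`, evaluated at the event `e'`. -/
noncomputable def fundCycle (b : ℕ) {S E : Type} [DecidableEq E] {A : TS S E}
    (T : SpanTree A) (s : S) (e : E) (s' : S) (e' : E) : ZMod (b + 1) :=
  ((T.count s e' : ZMod (b + 1)) - (T.count s' e' : ZMod (b + 1))) +
    (if e' = e then 1 else 0)

/-!
On a spanning tree, a support of an abstract signature `abs` is determined by its value at the
initial state: since it grows by `abs e` along each tree edge labelled `e`, it is that value plus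
the weight `∑ e, ψ_s(e) • abs e` of the tree path to `s`. So `abs` is an abstract signature exactly
when this weight is itself a support. The weight has the right increments along tree edges, and
its defect along a chord `t` is `ψ_t · abs`. As being an abstract signature does not refer to the
tree, all spanning trees impose equivalent equations. None of this is special to `ℤ_{b+1}`:
signatures may take values in any abelian group once `ψ_t` is read as an integer vector.
-/

/-- `sup` is a support of the `M`-valued signature `abs`. For `M = ZMod (b + 1)` this says that
`(sup, abs)` is an abstract region. -/
def TS.IsSupport {S E : Type} {M : Type*} [Add M] (A : TS S E) (abs : E → M) (sup : S → M) : Prop :=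
  ∀ s e s', A.delta s e = some s' → sup s' = sup s + abs e

namespace SpanTree

variable {S E : Type} [DecidableEq E] {A : TS S E}

@[elab_as_elim]
theorem induction (T : SpanTree A) {motive : S → Prop} (init : motive A.init)
    (step : ∀ p e s, T.parent s = some (p, e) → motive p → motive s) (s : S) : motive s := by
  induction s using (measure T.depth).wf.induction with
  | h s ih =>
    by_cases hs : s = A.init
    · exact hs ▸ init
    · obtain ⟨p, e, hp⟩ := T.parent_ne s hs
      exact step p e s hp (ih p (T.depth_lt s p e hp))

/-- The integer vector whose reduction modulo `b + 1` is the fundamental cycle `ψ_t` of the chord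
`t = s −e→ s'`. Integer entries let it act on signatures with values in any abelian group. -/
def intFundCycle (T : SpanTree A) (s : S) (e : E) (s' : S) (e' : E) : ℤ :=
  T.count s e' - T.count s' e' + if e' = e then 1 else 0

variable [Fintype E] {M : Type*}

/-- The sum of the labels `abs e` over the edges of the tree path from the initial state to `s`,
computed from the Parikh vector `T.count s`. -/
def pathWeight [AddCommMonoid M] (T : SpanTree A) (abs : E → M) (s : S) : M :=
  ∑ e, T.count s e • abs e

section AddCommMonoid

variable [AddCommMonoid M]

theorem pathWeight_init (T : SpanTree A) (abs : E → M) : T.pathWeight abs A.init = 0 := by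
  simp [pathWeight, T.count_init]

theorem pathWeight_of_parent_eq (T : SpanTree A) (abs : E → M) {s s' : S} {e : E}
    (h : T.parent s' = some (s, e)) : T.pathWeight abs s' = T.pathWeight abs s + abs e := by
  simp [pathWeight, T.count_parent s' s e _ h, add_smul, Finset.sum_add_distrib]

theorem isSupport_pathWeight_iff (T : SpanTree A) (abs : E → M) :
    A.IsSupport abs (T.pathWeight abs) ↔
      ∀ s e s', IsChord T s e s' → T.pathWeight abs s' = T.pathWeight abs s + abs e := by
  refine ⟨fun h s e s' ht => h s e s' ht.1, fun h s e s' hedge => ?_⟩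
  by_cases htree : T.parent s' = some (s, e)
  · exact T.pathWeight_of_parent_eq abs htree
  · exact h s e s' ⟨hedge, htree⟩

theorem eq_add_pathWeight_of_isSupport (T : SpanTree A) {abs : E → M} {sup : S → M}
    (hsup : A.IsSupport abs sup) (s : S) : sup s = sup A.init + T.pathWeight abs s := by
  induction s using T.induction with
  | init => rw [pathWeight_init, add_zero]
  | step p e s hp ih =>
    rw [hsup p e s (T.parent_edge s p e hp), ih, T.pathWeight_of_parent_eq abs hp, add_assoc]

end AddCommMonoid

theorem exists_isSupport_iff_isSupport_pathWeight [AddCancelCommMonoid M] (T : SpanTree A)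
    (abs : E → M) : (∃ sup, A.IsSupport abs sup) ↔ A.IsSupport abs (T.pathWeight abs) := by
  refine ⟨fun ⟨sup, hsup⟩ s e s' hedge => add_left_cancel (a := sup A.init) ?_, fun h => ⟨_, h⟩⟩
  calc sup A.init + T.pathWeight abs s'
      = sup s' := (T.eq_add_pathWeight_of_isSupport hsup s').symm
    _ = sup s + abs e := hsup s e s' hedge
    _ = sup A.init + (T.pathWeight abs s + abs e) := by
      rw [T.eq_add_pathWeight_of_isSupport hsup s, add_assoc]

theorem sum_intFundCycle_smul [AddCommGroup M] (T : SpanTree A) (abs : E → M) (s : S) (e : E)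
    (s' : S) :
    ∑ e', T.intFundCycle s e s' e' • abs e' =
      T.pathWeight abs s + abs e - T.pathWeight abs s' := by
  simp only [intFundCycle, pathWeight, add_smul, sub_smul, natCast_zsmul, ite_smul, one_smul,
    zero_smul, Finset.sum_add_distrib, Finset.sum_sub_distrib, Finset.sum_ite_eq', Finset.mem_univ,
    if_true]
  abel

theorem exists_isSupport_iff_sum_intFundCycle_smul_eq_zero [AddCommGroup M] (T : SpanTree A)
    (abs : E → M) :
    (∃ sup, A.IsSupport abs sup) ↔
      ∀ s e s', IsChord T s e s' → ∑ e', T.intFundCycle s e s' e' • abs e' = 0 := by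
  rw [T.exists_isSupport_iff_isSupport_pathWeight, T.isSupport_pathWeight_iff]
  simp only [T.sum_intFundCycle_smul, sub_eq_zero, @eq_comm M (_ + _)]

theorem sum_fundCycle_mul (b : ℕ) (T : SpanTree A) (abs : E → ZMod (b + 1)) (s : S) (e : E)
    (s' : S) :
    ∑ e', fundCycle b T s e s' e' * abs e' = ∑ e', T.intFundCycle s e s' e' • abs e' := by
  simp [fundCycle, intFundCycle]

end SpanTree

theorem stmt15_general {S E : Type} [Fintype E] [DecidableEq E] {M : Type*} [AddCommGroup M]
    {A : TS S E} (T : SpanTree A) :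
    (∀ abs : E → M,
      (∃ sup, A.IsSupport abs sup) ↔
        ∀ s e s', IsChord T s e s' → ∑ e', T.intFundCycle s e s' e' • abs e' = 0) ∧
    (∀ (T' : SpanTree A) (abs : E → M),
      (∀ s e s', IsChord T s e s' → ∑ e', T.intFundCycle s e s' e' • abs e' = 0) ↔
      (∀ s e s', IsChord T' s e s' → ∑ e', T'.intFundCycle s e s' e' • abs e' = 0)) :=
  ⟨T.exists_isSupport_iff_sum_intFundCycle_smul_eq_zero, fun T' abs =>
    (T.exists_isSupport_iff_sum_intFundCycle_smul_eq_zero abs).symm.trans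
      (T'.exists_isSupport_iff_sum_intFundCycle_smul_eq_zero abs)⟩

/-- Let `τ ∈ {τ_ZPT^b, τ_ZPPT^b, τ_RZPT^b}` and let `A'` (here `T`)
be a spanning tree of the TS `A`.  A vector `abs ∈ ℤ_{b+1}^E` is an abstract
signature of `A` iff `ψ_t · abs = 0` for every chord `t` of `T`.  Consequently, any
two spanning trees of `A` yield equivalent systems of fundamental-cycle equations. -/
theorem stmt15 (b : ℕ) (hb : 1 ≤ b) (τ : NetType)
    (hτ : τ = tauZPT b ∨ τ = tauZPPT b ∨ τ = tauRZPT b)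
    {S E : Type} [Fintype E] [DecidableEq E] (A : TS S E) (hinit : A.Initialized)
    (T : SpanTree A) :
    (∀ abs : E → ZMod (b + 1),
      AbstractSig b A abs ↔
        ∀ s e s', IsChord T s e s' →
          (∑ e' : E, fundCycle b T s e s' e' * abs e') = 0) ∧
    (∀ (T' : SpanTree A) (abs : E → ZMod (b + 1)),
      (∀ s e s', IsChord T s e s' →
        (∑ e' : E, fundCycle b T s e s' e' * abs e') = 0) ↔
      (∀ s e s', IsChord T' s e s' →
        (∑ e' : E, fundCycle b T' s e s' e' * abs e') = 0)) := by
  simp only [SpanTree.sum_fundCycle_mul]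
  exact stmt15_general T

end PNS
end

section
/- Let b ∈ ℕ⁺, τ ∈ {τ_ZPT^b, τ_ZPPT^b, τ_RZPT^b} and let (sup, sig) be a τ-region of a TS A = (S, E, δ, ι). Define abs : E → {0,…,b} by abs(e) = (−m + n) mod (b+1) if sig(e) = (m,n) is a pair event, and abs(e) = sig(e) if sig(e) ∈ {0,…,b}. Then (sup, abs) is an abstract τ-region of A. -/
namespace PNS

/-- The group element `(−m + n) mod (b + 1)` of a pair event `(m, n)`, or the event itself if it is
a group element. The summand `b + 1` keeps the subtraction from truncating when `m ≤ b + 1`. -/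
def BEvent.residue (b : ℕ) : BEvent → ℕ
  | .pair m n => (n + (b + 1) - m) % (b + 1)
  | .num z => z

/-- The common generalization of `τ_ZPT^b`, `τ_ZPPT^b` and `τ_RZPT^b`: group elements of
`{0, …, b}` act by addition modulo `b + 1`, and pair events act by restrictions of their action in
`τ_PT^b`. The laws for `τ.delta` are relative to `τ.states` and `τ.events`, outside of which its
values carry no meaning. -/
structure NetType.IsZExtended (τ : NetType) (b : ℕ) : Prop where
  le_of_mem_states {s : ℕ} : s ∈ τ.states → s ≤ b
  num_mem_events_iff {z : ℕ} : .num z ∈ τ.events ↔ z ≤ b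
  delta_num {s z : ℕ} : s ∈ τ.states → .num z ∈ τ.events →
    τ.delta s (.num z) = some ((s + z) % (b + 1))
  deltaPT_of_delta_pair {s m n s' : ℕ} : s ∈ τ.states → .pair m n ∈ τ.events →
    τ.delta s (.pair m n) = some s' → deltaPT b s (.pair m n) = some s'

theorem deltaPT_pair_eq_some_iff {b s m n s' : ℕ} :
    deltaPT b s (.pair m n) = some s' ↔ m ≤ s ∧ s' ≤ b ∧ s' + m = s + n := by
  simp only [deltaPT, Option.ite_none_right_eq_some, Option.some.injEq]
  omega

theorem tauZPT_isZExtended (b : ℕ) : (tauZPT b).IsZExtended b where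
  le_of_mem_states hs := hs
  num_mem_events_iff := by simp [tauZPT]
  delta_num _ _ := rfl
  deltaPT_of_delta_pair _ _ h := h

theorem tauZPPT_isZExtended (b : ℕ) : (tauZPPT b).IsZExtended b where
  le_of_mem_states hs := hs
  num_mem_events_iff := by simp [tauZPPT]
  delta_num _ _ := rfl
  deltaPT_of_delta_pair _ _ h := h

theorem tauRZPT_isZExtended (b : ℕ) : (tauRZPT b).IsZExtended b where
  le_of_mem_states hs := hs
  num_mem_events_iff := by simp [tauRZPT]
  delta_num _ _ := rfl
  deltaPT_of_delta_pair _ _ h := by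
    simp only [tauRZPT, deltaRZPT, Option.ite_none_right_eq_some, Option.some.injEq] at h
    rw [deltaPT_pair_eq_some_iff]
    omega

theorem BEvent.add_residue_mod_of_deltaPT {b s m n s' : ℕ} (hs : s ≤ b)
    (h : deltaPT b s (.pair m n) = some s') :
    (s + residue b (.pair m n)) % (b + 1) = s' := by
  obtain ⟨hm, hs', hadd⟩ := deltaPT_pair_eq_some_iff.1 h
  calc (s + (n + (b + 1) - m) % (b + 1)) % (b + 1)
      = (s + (n + (b + 1) - m)) % (b + 1) := Nat.add_mod_mod ..
    _ = (s' + (b + 1)) % (b + 1) := by congr 1; omega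
    _ = s' % (b + 1) := Nat.add_mod_right ..
    _ = s' := Nat.mod_eq_of_lt (Nat.lt_succ_of_le hs')

namespace NetType.IsZExtended

variable {τ : NetType} {b : ℕ}

theorem residue_le (hτ : τ.IsZExtended b) {e : BEvent} (he : e ∈ τ.events) :
    e.residue b ≤ b := by
  cases e with
  | pair m n => exact Nat.le_of_lt_succ (Nat.mod_lt _ b.succ_pos)
  | num z => exact hτ.num_mem_events_iff.1 he

theorem num_residue_mem_events (hτ : τ.IsZExtended b) {e : BEvent} (he : e ∈ τ.events) :
    .num (e.residue b) ∈ τ.events :=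
  hτ.num_mem_events_iff.2 (hτ.residue_le he)

theorem delta_num_residue (hτ : τ.IsZExtended b) {s s' : ℕ} {e : BEvent} (hs : s ∈ τ.states)
    (he : e ∈ τ.events) (h : τ.delta s e = some s') :
    τ.delta s (.num (e.residue b)) = some s' := by
  cases e with
  | pair m n =>
    have hPT : deltaPT b s (.pair m n) = some s' := hτ.deltaPT_of_delta_pair hs he h
    rw [hτ.delta_num hs (hτ.num_residue_mem_events he),
      BEvent.add_residue_mod_of_deltaPT (hτ.le_of_mem_states hs) hPT]
  | num z => exact h

end NetType.IsZExtended

theorem stmt16_general {b : ℕ} {τ : NetType} (hτ : τ.IsZExtended b) {S E : Type} {A : TS S E}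
    {sup : S → ℕ} {sig : E → BEvent} (h : IsRegion τ A sup sig) :
    IsRegion τ A sup (fun e => .num ((sig e).residue b)) where
  sup_mem := h.sup_mem
  sig_mem e := hτ.num_residue_mem_events (h.sig_mem e)
  edge s e s' hs := hτ.delta_num_residue (h.sup_mem s) (h.sig_mem e) (h.edge s e s' hs)

/-- Let `τ ∈ {τ_ZPT^b, τ_ZPPT^b, τ_RZPT^b}` and let `(sup, sig)` be
a `τ`-region of `A`.  Replacing each signature value `(m,n)` by the group element
`(−m+n) mod (b+1)` (and keeping group-element values) yields an abstract `τ`-region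
`(sup, abs)` of `A`. -/
theorem stmt16 (b : ℕ) (hb : 1 ≤ b) (τ : NetType)
    (hτ : τ = tauZPT b ∨ τ = tauZPPT b ∨ τ = tauRZPT b)
    {S E : Type} (A : TS S E) (hinit : A.Initialized)
    (sup : S → ℕ) (sig : E → BEvent) (h : IsRegion τ A sup sig) :
    IsRegion τ A sup (fun e =>
      BEvent.num (match sig e with
        | BEvent.pair m n => (n + (b + 1) - m) % (b + 1)
        | BEvent.num z => z)) := by
  rcases hτ with rfl | rfl | rfl
  exacts [stmt16_general (tauZPT_isZExtended b) h, stmt16_general (tauZPPT_isZExtended b) h,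
    stmt16_general (tauRZPT_isZExtended b) h]

end PNS
end
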